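/- arXiv:2404.09588 — 2 statements merged into one kernel-verified Lean document; each statement's English description precedes it below -/
import Mathlib

section
/- Let n ≥ 1, α > 0, q ∈ (1,∞), q̄(·) ∈ P^emb_q(ℝ^n), and let p : [0,∞) → [1,∞) be measurable with 1 < p⁻ ≤ p⁺ < ∞. Then there exists a constant C > 0, independent of T and f, such that for all T > 0 and all measurable f : (0,∞)×ℝ^n → ℝ with ∫_0^∞ ‖f(s,·)‖_{L^{q̄(·)}(ℝ^n)} ds < ∞: ‖(t,x) ↦ ∫_0^t (𝔤_{t−s}^α ∗ f(s,·))(x) ds‖_{E_T} ≤ C · max{T^{1/p⁻}, T^{1/p⁺}} · ∫_0^∞ ‖f(s,·)‖_{L^{q̄(·)}(ℝ^n)} ds. -/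
open MeasureTheory Set
open scoped ENNReal FourierTransform

noncomputable section

/-- Euclidean space `ℝ^n`. -/
abbrev Rn (n : ℕ) := EuclideanSpace ℝ (Fin n)

/-- Luxemburg norm of an `ℝ≥0∞`-valued function for a variable exponent `p`. -/
def luxNorm {Ω : Type*} [MeasurableSpace Ω] (μ : Measure Ω) (p : Ω → ℝ) (f : Ω → ℝ≥0∞) : ℝ≥0∞ :=
  sInf {lam : ℝ≥0∞ | 0 < lam ∧ ∫⁻ x, (f x / lam) ^ (p x) ∂μ ≤ 1}

/-- Luxemburg norm `‖f‖_{L^{p(·)}}` of a real-valued function. -/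
def luxNormR {Ω : Type*} [MeasurableSpace Ω] (μ : Measure Ω) (p : Ω → ℝ) (f : Ω → ℝ) : ℝ≥0∞ :=
  luxNorm μ p (fun x => ENNReal.ofReal |f x|)

/-- `p(·) ∈ P^log(Ω)`: measurable, with values in `[1,∞)` on `Ω`, locally log-Hölder
continuous on `Ω`, and satisfying the log-Hölder decay condition on `Ω`. -/
def IsPLog {E : Type*} [NormedAddCommGroup E] [MeasurableSpace E] (Ω : Set E) (p : E → ℝ) : Prop :=
  Measurable p ∧ (∀ x ∈ Ω, 1 ≤ p x) ∧
  ∃ C₁ > (0:ℝ), ∃ C₂ > (0:ℝ), ∃ pinf : ℝ,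
    (∀ x ∈ Ω, ∀ y ∈ Ω, x ≠ y →
      |1 / p x - 1 / p y| ≤ C₁ / Real.log (Real.exp 1 + 1 / ‖x - y‖)) ∧
    (∀ x ∈ Ω, |1 / p x - 1 / pinf| ≤ C₂ / Real.log (Real.exp 1 + ‖x‖))

/-- The fractional heat kernel `𝔤_t^α` on `ℝ^n`: the inverse Fourier transform of
`ξ ↦ exp (-t‖ξ‖^{2α})` (it is real-valued; we take the real part). -/
def gKer (n : ℕ) (α t : ℝ) (x : Rn n) : ℝ :=
  (𝓕⁻ (fun ξ : Rn n => (Real.exp (-t * ‖ξ‖ ^ (2 * α)) : ℂ)) x).re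

/-- Convolution on `ℝ^n`. -/
def conv (n : ℕ) (g f : Rn n → ℝ) (x : Rn n) : ℝ := ∫ y, g (x - y) * f y

/-- The class `P^emb_q(ℝ^n)` of variable exponents whose Lebesgue space embeds in `L^q`. -/
def IsPembq (n : ℕ) (q : ℝ) (qb : Rn n → ℝ) : Prop :=
  IsPLog univ qb ∧ q ≤ essInf qb volume ∧
  (∃ M : ℝ, ∀ᵐ x ∂(volume : Measure (Rn n)), qb x ≤ M) ∧
  Filter.Tendsto (fun x : Rn n => q * qb x / (qb x - q)) (Filter.cocompact (Rn n)) Filter.atTop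

/-- The Luxemburg-type norm of `E_T = L^{p(·)}([0,T], L^q(ℝ^n))`:
`‖u‖_{E_T} = inf {λ > 0 : ∫_0^T (‖u(t,·)‖_{L^q}/λ)^{p(t)} dt ≤ 1}`. -/
def eNormT (n : ℕ) (p : ℝ → ℝ) (q T : ℝ) (u : ℝ → Rn n → ℝ) : ℝ≥0∞ :=
  sInf {lam : ℝ≥0∞ | 0 < lam ∧
    ∫⁻ t in Ioc (0:ℝ) T, (eLpNorm (u t) (ENNReal.ofReal q) volume / lam) ^ (p t) ≤ 1}

/-!
Minkowski's integral inequality, together with the translation invariance of the `L^q` norm, bounds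
the `L^q` norm of the Duhamel integral at time `t` by `∫_0^t ‖𝔤_{t-s}‖_1 ‖f(s)‖_q ds`; the `E_T`
norm of a function whose `L^q` norm is bounded in `t` costs at most the factor
`max (T^{1/p⁻}) (T^{1/p⁺})`. So it remains to embed `L^{q̄(·)}` into `L^q` and to bound `‖𝔤_t‖_1`.

For the embedding, Young's inequality gives `(κv)^q ≤ v^{q̄(x)} + κ^{m(x)}` pointwise, where
`m = q q̄ / (q̄ - q)`. The log-Hölder decay condition gives `1 / m(x) = O(1 / log (e + |x|))`, so
for small `κ` the last term is integrable.

For the kernel, dilation invariance of the `L^1` norm reduces to `t = 1`. Taylor's formula based at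
infinity writes `exp (-r^α)` as an integral over `s > 0` of multiples of `(1 - r/s)₊ᵏ`, and at
`r = |ξ|²` these are dilates of one Bochner–Riesz symbol. For `k` large its Fourier transform is
integrable, with a norm that does not see the dilation, and the weights are integrable in `s`
because `exp (-s^α)` and its derivatives decay rapidly.
-/

section Minkowski

variable {X S : Type*} [MeasurableSpace X] [MeasurableSpace S] {μ : Measure X} {ν : Measure S}
  {q : ℝ}

theorem eLpNorm_ofReal_eq_lintegral {ε : Type*} [ENorm ε] (hq : 0 < q) (h : X → ε) :
    eLpNorm h (ENNReal.ofReal q) μ = (∫⁻ x, ‖h x‖ₑ ^ q ∂μ) ^ (1 / q) := by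
  rw [eLpNorm_eq_lintegral_rpow_enorm_toReal (by simpa using hq) ENNReal.ofReal_ne_top,
    ENNReal.toReal_ofReal hq.le]

theorem rpow_lintegral_le_of_weight {h u : S → ℝ≥0∞} (hq : 1 ≤ q) (hh : Measurable h)
    (hu : Measurable u) (hu0 : ∀ s, u s ≠ 0) (hut : ∀ᵐ s ∂ν, u s ≠ ⊤) :
    (∫⁻ s, h s ∂ν) ^ q ≤ (∫⁻ s, u s ∂ν) ^ (q - 1) * ∫⁻ s, u s ^ (1 - q) * h s ^ q ∂ν := by
  have hq0 : 0 < q := by linarith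
  have hdensity (r : ℝ) (hr : 1 ≤ r) : ∫⁻ s, (h s / u s) ^ r ∂ν.withDensity u =
      ∫⁻ s, u s ^ (1 - r) * h s ^ r ∂ν := by
    rw [lintegral_withDensity_eq_lintegral_mul _ hu (by fun_prop)]
    refine lintegral_congr_ae (hut.mono fun s hs => ?_)
    simp only [Pi.mul_apply]
    rw [ENNReal.div_rpow_of_nonneg _ _ (by linarith), ENNReal.rpow_sub _ _ (hu0 s) hs,
      ENNReal.rpow_one, div_eq_mul_inv, div_eq_mul_inv]
    ring
  have jensen := eLpNorm'_le_eLpNorm'_mul_rpow_measure_univ one_pos hq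
    (hh.div hu).aestronglyMeasurable (μ := ν.withDensity u)
  simp only [eLpNorm', Pi.div_apply, enorm_eq_self, hdensity 1 le_rfl, hdensity q hq] at jensen
  simp only [ENNReal.rpow_one, div_one, sub_self, ENNReal.rpow_zero, one_mul,
    withDensity_apply _ MeasurableSet.univ, Measure.restrict_univ] at jensen
  calc (∫⁻ s, h s ∂ν) ^ q
      ≤ ((∫⁻ s, u s ^ (1 - q) * h s ^ q ∂ν) ^ (1 / q) * (∫⁻ s, u s ∂ν) ^ (1 - 1 / q)) ^ q := by
        gcongr
    _ = _ := by
        rw [ENNReal.mul_rpow_of_nonneg _ _ hq0.le, ← ENNReal.rpow_mul, ← ENNReal.rpow_mul,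
          one_div_mul_cancel hq0.ne', ENNReal.rpow_one, sub_mul, one_mul,
          one_div_mul_cancel hq0.ne', mul_comm]

theorem lintegral_rpow_lintegral_le_of_le_weight [SFinite μ] [SFinite ν] {F : S → X → ℝ≥0∞}
    {u : S → ℝ≥0∞} (hq : 1 ≤ q) (hF : Measurable (Function.uncurry F)) (hu : Measurable u)
    (hu0 : ∀ s, u s ≠ 0) (hut : ∫⁻ s, u s ∂ν ≠ ⊤) (hFu : ∀ s, ∫⁻ x, F s x ^ q ∂μ ≤ u s ^ q) :
    ∫⁻ x, (∫⁻ s, F s x ∂ν) ^ q ∂μ ≤ (∫⁻ s, u s ∂ν) ^ q := by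
  have hut' : ∀ᵐ s ∂ν, u s ≠ ⊤ := (ae_lt_top hu hut).mono fun s => LT.lt.ne
  have hmeas : Measurable (Function.uncurry fun s x => u s ^ (1 - q) * F s x ^ q) :=
    ((hu.comp measurable_fst).pow_const _).mul (hF.pow_const q)
  calc ∫⁻ x, (∫⁻ s, F s x ∂ν) ^ q ∂μ
      ≤ ∫⁻ x, (∫⁻ s, u s ∂ν) ^ (q - 1) * ∫⁻ s, u s ^ (1 - q) * F s x ^ q ∂ν ∂μ :=
        lintegral_mono fun x =>
          rpow_lintegral_le_of_weight hq (hF.comp measurable_prodMk_right) hu hu0 hut'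
    _ = (∫⁻ s, u s ∂ν) ^ (q - 1) * ∫⁻ s, u s ^ (1 - q) * ∫⁻ x, F s x ^ q ∂μ ∂ν := by
        rw [lintegral_const_mul' _ _ (ENNReal.rpow_ne_top_of_nonneg (by linarith) hut),
          ← lintegral_lintegral_swap hmeas.aemeasurable]
        congr 1
        exact lintegral_congr fun s =>
          lintegral_const_mul _ ((hF.comp measurable_prodMk_left).pow_const q)
    _ ≤ (∫⁻ s, u s ∂ν) ^ (q - 1) * ∫⁻ s, u s ∂ν := by
        gcongr (∫⁻ s, u s ∂ν) ^ (q - 1) * ?_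
        refine lintegral_mono_ae (hut'.mono fun s hs => ?_)
        calc u s ^ (1 - q) * ∫⁻ x, F s x ^ q ∂μ ≤ u s ^ (1 - q) * u s ^ q := by
              gcongr
              exact hFu s
          _ = u s := by rw [← ENNReal.rpow_add _ _ (hu0 s) hs, sub_add_cancel, ENNReal.rpow_one]
    _ = (∫⁻ s, u s ∂ν) ^ q := by
        nth_rewrite 2 [← ENNReal.rpow_one (∫⁻ s, u s ∂ν)]
        rw [← ENNReal.rpow_add_of_nonneg _ _ (by linarith) one_pos.le, sub_add_cancel]

-- Hölder with the weight `u s = ‖F s‖_q + g s`, where `g > 0` has integral `< ε`.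
theorem lintegral_rpow_lintegral_le [SFinite μ] [SigmaFinite ν] {F : S → X → ℝ≥0∞} (hq : 1 ≤ q)
    (hF : Measurable (Function.uncurry F)) :
    (∫⁻ x, (∫⁻ s, F s x ∂ν) ^ q ∂μ) ^ (1 / q) ≤
      ∫⁻ s, (∫⁻ x, F s x ^ q ∂μ) ^ (1 / q) ∂ν := by
  have hq0 : 0 < q := by linarith
  rw [one_div]
  have hN : Measurable fun s => (∫⁻ x, F s x ^ q ∂μ) ^ q⁻¹ :=
    (hF.pow_const q).lintegral_prod_right'.pow_const _
  refine ENNReal.le_of_forall_pos_le_add fun ε hε hfin => ?_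
  obtain ⟨g, hg0, hgm, hgε⟩ :=
    exists_pos_lintegral_lt_of_sigmaFinite ν (ENNReal.coe_ne_zero.2 hε.ne')
  have hsum := lintegral_add_left hN (fun s => (g s : ℝ≥0∞)) (μ := ν)
  have hut : ∫⁻ s, ((∫⁻ x, F s x ^ q ∂μ) ^ q⁻¹ + g s) ∂ν ≠ ⊤ := by
    rw [hsum]
    exact ENNReal.add_ne_top.2 ⟨hfin.ne, hgε.ne_top⟩
  calc (∫⁻ x, (∫⁻ s, F s x ∂ν) ^ q ∂μ) ^ q⁻¹
      ≤ ∫⁻ s, ((∫⁻ x, F s x ^ q ∂μ) ^ q⁻¹ + g s) ∂ν := by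
        rw [ENNReal.rpow_inv_le_iff hq0]
        refine lintegral_rpow_lintegral_le_of_le_weight hq hF
          (hN.add hgm.coe_nnreal_ennreal) (fun s => ?_) hut fun s => ?_
        · simp [(hg0 s).ne']
        · rw [← ENNReal.rpow_inv_le_iff hq0]
          exact le_self_add
    _ ≤ _ := by
        rw [hsum]
        gcongr

end Minkowski

section Luxemburg

variable {Ω : Type*} [MeasurableSpace Ω] {μ : Measure Ω}

theorem le_max_rpow_rpow {a b r : ℝ} (m : ℝ≥0∞) (ha : 0 < a) (har : a ≤ r) (hrb : r ≤ b) :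
    m ≤ max (m ^ (1 / a)) (m ^ (1 / b)) ^ r := by
  have hr : 0 < r := ha.trans_le har
  rcases le_total 1 m with hm | hm
  · calc m = m ^ (1 : ℝ) := (ENNReal.rpow_one m).symm
      _ ≤ m ^ (1 / a * r) := by
        gcongr
        rwa [one_div_mul_eq_div, one_le_div ha]
      _ = (m ^ (1 / a)) ^ r := ENNReal.rpow_mul _ _ _
      _ ≤ _ := by gcongr; exact le_max_left _ _
  · calc m = m ^ (1 : ℝ) := (ENNReal.rpow_one m).symm
      _ ≤ m ^ (1 / b * r) := by
        refine ENNReal.rpow_le_rpow_of_exponent_ge hm ?_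
        rwa [one_div_mul_eq_div, div_le_one (hr.trans_le hrb)]
      _ = (m ^ (1 / b)) ^ r := ENNReal.rpow_mul _ _ _
      _ ≤ _ := by gcongr; exact le_max_right _ _

theorem luxNorm_le_of_ae_le {p : Ω → ℝ} {f : Ω → ℝ≥0∞} {a b : ℝ} {B : ℝ≥0∞} (ha : 0 < a)
    (hap : ∀ᵐ x ∂μ, a ≤ p x) (hpb : ∀ᵐ x ∂μ, p x ≤ b) (hf : ∀ᵐ x ∂μ, f x ≤ B) :
    luxNorm μ p f ≤ max (μ univ ^ (1 / a)) (μ univ ^ (1 / b)) * B := by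
  set M := max (μ univ ^ (1 / a)) (μ univ ^ (1 / b))
  refine le_of_forall_gt_imp_ge_of_dense fun lam hlam => sInf_le ⟨pos_of_gt hlam, ?_⟩
  have hpoint : ∀ᵐ x ∂μ, (f x / lam) ^ p x ≤ (μ univ)⁻¹ := by
    filter_upwards [hap, hpb, hf] with x hax hxb hfx
    have hM : f x / lam ≤ M⁻¹ := by
      rw [ENNReal.le_inv_iff_mul_le]
      calc f x / lam * M = M * f x / lam := by rw [mul_comm, mul_div_assoc]
        _ ≤ lam / lam := by
          gcongr
          exact (mul_le_mul_right hfx M).trans hlam.le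
        _ ≤ 1 := ENNReal.div_self_le_one
    calc (f x / lam) ^ p x ≤ (M⁻¹) ^ p x := by
          gcongr
          exact ha.le.trans hax
      _ = (M ^ p x)⁻¹ := ENNReal.inv_rpow _ _
      _ ≤ (μ univ)⁻¹ := by
          gcongr
          exact le_max_rpow_rpow _ ha hax hxb
  calc ∫⁻ x, (f x / lam) ^ p x ∂μ ≤ ∫⁻ _, (μ univ)⁻¹ ∂μ := lintegral_mono_ae hpoint
    _ ≤ 1 := by
      rw [lintegral_const]
      exact ENNReal.inv_mul_le_one _

theorem rpow_lintegral_rpow_le_luxNorm {b : Ω → ℝ} {w : Ω → ℝ≥0∞} {q : ℝ} {κ : ℝ≥0∞} (hq : 0 < q)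
    (hκ0 : κ ≠ 0) (hκ : κ ≠ ⊤) (hw : Measurable w) (hwt : ∫⁻ x, w x ∂μ ≠ ⊤)
    (hle : ∀ᵐ x ∂μ, ∀ v : ℝ≥0∞, (κ * v) ^ q ≤ v ^ b x + w x) (f : Ω → ℝ≥0∞) :
    (∫⁻ x, f x ^ q ∂μ) ^ (1 / q) ≤ κ⁻¹ * (1 + ∫⁻ x, w x ∂μ) ^ (1 / q) * luxNorm μ b f := by
  set D := 1 + ∫⁻ x, w x ∂μ with hD
  have hK0 : κ⁻¹ * D ^ (1 / q) ≠ 0 := mul_ne_zero (by simpa using hκ) (by simp [hD, hq.le])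
  have hK : κ⁻¹ * D ^ (1 / q) ≠ ⊤ := ENNReal.mul_ne_top (by simpa using hκ0)
    (ENNReal.rpow_ne_top_of_nonneg (by positivity) (by simp [hD, hwt]))
  rw [mul_comm, ← ENNReal.div_le_iff_le_mul (.inl hK0) (.inl hK)]
  refine le_sInf fun lam ⟨hlam0, hlam⟩ => ?_
  rcases eq_or_ne lam ⊤ with rfl | hlamt
  · exact le_top
  rw [ENNReal.div_le_iff_le_mul (.inl hK0) (.inl hK), one_div, ENNReal.rpow_inv_le_iff hq]
  calc ∫⁻ x, f x ^ q ∂μ = ∫⁻ x, (κ⁻¹ * lam) ^ q * (κ * (f x / lam)) ^ q ∂μ := by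
        refine lintegral_congr fun x => ?_
        rw [← ENNReal.mul_rpow_of_nonneg _ _ hq.le, mul_mul_mul_comm,
          ENNReal.inv_mul_cancel hκ0 hκ, one_mul, ENNReal.mul_div_cancel hlam0.ne' hlamt]
    _ = (κ⁻¹ * lam) ^ q * ∫⁻ x, (κ * (f x / lam)) ^ q ∂μ :=
        lintegral_const_mul' _ _ (ENNReal.rpow_ne_top_of_nonneg hq.le
          (ENNReal.mul_ne_top (by simpa using hκ0) hlamt))
    _ ≤ (κ⁻¹ * lam) ^ q * ∫⁻ x, ((f x / lam) ^ b x + w x) ∂μ := by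
        gcongr (κ⁻¹ * lam) ^ q * ?_
        exact lintegral_mono_ae (hle.mono fun x hx => hx _)
    _ ≤ (κ⁻¹ * lam) ^ q * D := by
        rw [lintegral_add_right _ hw, hD]
        gcongr
    _ = (lam * (κ⁻¹ * D ^ q⁻¹)) ^ q := by
        rw [← mul_assoc, mul_comm lam, ENNReal.mul_rpow_of_nonneg _ (D ^ q⁻¹) hq.le,
          ENNReal.rpow_inv_rpow hq.ne']

end Luxemburg

section Embedding

theorem mul_rpow_le_rpow_add_rpow {q b : ℝ} (κ v : ℝ≥0∞) (hq : 0 < q) (hqb : q < b) :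
    (κ * v) ^ q ≤ v ^ b + κ ^ (q * b / (b - q)) := by
  have hbq : 0 < b - q := sub_pos.2 hqb
  rcases le_total (κ ^ q) (v ^ (b - q)) with h | h
  · calc (κ * v) ^ q = κ ^ q * v ^ q := ENNReal.mul_rpow_of_nonneg _ _ hq.le
      _ ≤ v ^ (b - q) * v ^ q := by gcongr
      _ = v ^ b := by rw [← ENNReal.rpow_add_of_nonneg _ _ hbq.le hq.le, sub_add_cancel]
      _ ≤ _ := le_self_add
  · have hv : v ≤ κ ^ (q / (b - q)) := by
      rwa [div_eq_mul_inv, ENNReal.rpow_mul, ENNReal.le_rpow_inv_iff hbq]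
    calc (κ * v) ^ q ≤ (κ ^ (1 : ℝ) * κ ^ (q / (b - q))) ^ q := by
          rw [ENNReal.rpow_one]
          gcongr
      _ = κ ^ (q * b / (b - q)) := by
        rw [← ENNReal.rpow_add_of_nonneg _ _ one_pos.le (by positivity), ← ENNReal.rpow_mul]
        congr 1
        field_simp
        ring
      _ ≤ _ := le_add_self

theorem exp_neg_mul_rpow_le_one_add_rpow_neg {q b C r d : ℝ} (hq : 0 < q) (hqb : q < b)
    (hr : 0 ≤ r) (hd : 0 ≤ d) (h : 1 / q - 1 / b ≤ C / Real.log (Real.exp 1 + r)) :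
    Real.exp (-(C * d)) ^ (q * b / (b - q)) ≤ (1 + r) ^ (-d) := by
  have hb : 0 < b := hq.trans hqb
  have hbq : 0 < b - q := sub_pos.2 hqb
  have hlog : 0 < Real.log (Real.exp 1 + r) :=
    Real.log_pos (by linarith [Real.add_one_lt_exp one_ne_zero])
  have hlog_le : Real.log (1 + r) ≤ C * (q * b / (b - q)) :=
    calc Real.log (1 + r) ≤ Real.log (Real.exp 1 + r) :=
          Real.log_le_log (by positivity) (by linarith [Real.add_one_le_exp 1])
      _ ≤ C * (q * b / (b - q)) := by
          rw [le_div_iff₀ hlog, show 1 / q - 1 / b = (q * b / (b - q))⁻¹ by field_simp] at h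
          rwa [inv_mul_le_iff₀ (by positivity), mul_comm] at h
  rw [← Real.exp_mul, Real.rpow_def_of_pos (by positivity)]
  refine Real.exp_le_exp.2 ?_
  linarith [mul_le_mul_of_nonneg_right hlog_le hd]

variable {n : ℕ} {q : ℝ} {qb : Rn n → ℝ}

theorem IsPembq.tendsto_one_div (hqb : IsPembq n q qb) (hq : 0 < q) :
    Filter.Tendsto (fun x => 1 / qb x) (Filter.cocompact (Rn n)) (nhds (1 / q)) := by
  obtain ⟨⟨-, hone, -⟩, -, -, htend⟩ := hqb
  have hlim : Filter.Tendsto (fun x => 1 / q - (q * qb x / (qb x - q))⁻¹)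
      (Filter.cocompact (Rn n)) (nhds (1 / q)) := by
    simpa only [sub_zero, Pi.inv_apply] using tendsto_const_nhds.sub htend.inv_tendsto_atTop
  refine hlim.congr' ?_
  filter_upwards with x
  have hqb0 : qb x ≠ 0 := (one_pos.trans_le (hone x (mem_univ x))).ne'
  rw [inv_div]
  field_simp
  ring

theorem IsPembq.exists_inv_sub_inv_le (hqb : IsPembq n q qb) (hn : 1 ≤ n) (hq : 0 < q) :
    ∃ C > (0 : ℝ), ∀ x, |1 / qb x - 1 / q| ≤ C / Real.log (Real.exp 1 + ‖x‖) := by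
  have hlim := hqb.tendsto_one_div hq
  obtain ⟨⟨-, -, -, -, C, hC, pinf, -, hdecay⟩, -⟩ := hqb
  have : Nonempty (Fin n) := ⟨⟨0, hn⟩⟩
  have hlog : Filter.Tendsto (fun x : Rn n => C / Real.log (Real.exp 1 + ‖x‖))
      (Filter.cocompact (Rn n)) (nhds 0) :=
    (Real.tendsto_log_atTop.comp
      (Filter.tendsto_atTop_add_const_left _ _ (tendsto_norm_cocompact_atTop))).const_div_atTop C
  have hpinf : Filter.Tendsto (fun x => 1 / qb x) (Filter.cocompact (Rn n)) (nhds (1 / pinf)) :=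
    tendsto_iff_dist_tendsto_zero.2 <|
      squeeze_zero (fun _ => dist_nonneg) (fun x => hdecay x (mem_univ x)) hlog
  refine ⟨C, hC, fun x => ?_⟩
  rw [tendsto_nhds_unique hlim hpinf]
  exact hdecay x (mem_univ x)

theorem IsPembq.ae_le (hqb : IsPembq n q qb) : ∀ᵐ x, q ≤ qb x := by
  obtain ⟨⟨-, hone, -⟩, hess, -⟩ := hqb
  have hbdd : ∀ᵐ x, essInf qb volume ≤ qb x :=
    ae_essInf_le (Filter.isBoundedUnder_of ⟨1, fun x => hone x (mem_univ x)⟩)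
  exact hbdd.mono fun x => hess.trans

theorem IsPembq.eLpNorm_le_luxNormR (hqb : IsPembq n q qb) (hn : 1 ≤ n) (hq : 0 < q) :
    ∃ K : ℝ≥0∞, K ≠ ⊤ ∧ ∀ h : Rn n → ℝ,
      eLpNorm h (ENNReal.ofReal q) volume ≤ K * luxNormR volume qb h := by
  obtain ⟨C, hC, hdecay⟩ := hqb.exists_inv_sub_inv_le hn hq
  set κ : ℝ≥0∞ := ENNReal.ofReal (Real.exp (-(C * (n + 1))))
  set w : Rn n → ℝ≥0∞ := fun x => ENNReal.ofReal ((1 + ‖x‖) ^ (-((n : ℝ) + 1)))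
  have hκ0 : κ ≠ 0 := by simp [κ, Real.exp_pos]
  have hκ1 : κ ≤ 1 := by
    rw [ENNReal.ofReal_le_one, Real.exp_le_one_iff, neg_nonpos]
    positivity
  have hwt : ∫⁻ x, w x ≠ ⊤ := by
    have : Integrable (fun x : Rn n => (1 + ‖x‖) ^ (-((n : ℝ) + 1))) :=
      integrable_one_add_norm (by simp)
    exact this.lintegral_lt_top.ne
  have young : ∀ᵐ x, ∀ v : ℝ≥0∞, (κ * v) ^ q ≤ v ^ qb x + w x := by
    filter_upwards [hqb.ae_le] with x hx v
    rcases hx.eq_or_lt with heq | hlt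
    · calc (κ * v) ^ q ≤ (1 * v) ^ q := by gcongr
        _ = v ^ qb x := by rw [one_mul, ← heq]
        _ ≤ _ := le_self_add
    · refine (mul_rpow_le_rpow_add_rpow κ v hq hlt).trans ?_
      gcongr
      rw [ENNReal.ofReal_rpow_of_pos (Real.exp_pos _)]
      refine ENNReal.ofReal_le_ofReal (exp_neg_mul_rpow_le_one_add_rpow_neg hq hlt
        (norm_nonneg x) (by positivity) ?_)
      simpa only [neg_sub] using (neg_le_abs _).trans (hdecay x)
  refine ⟨κ⁻¹ * (1 + ∫⁻ x, w x) ^ (1 / q), ?_, fun h => ?_⟩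
  · exact ENNReal.mul_ne_top (ENNReal.inv_ne_top.2 hκ0)
      (ENNReal.rpow_ne_top_of_nonneg (by positivity) (by simp [hwt]))
  · rw [eLpNorm_ofReal_eq_lintegral hq]
    simp only [Real.enorm_eq_ofReal_abs]
    exact rpow_lintegral_rpow_le_luxNorm hq hκ0 ENNReal.ofReal_ne_top
      (by fun_prop) hwt young _

end Embedding

section Convolution

theorem enorm_conv_le {n : ℕ} (g f : Rn n → ℝ) (x : Rn n) :
    ‖conv n g f x‖ₑ ≤ ∫⁻ y, ‖g y‖ₑ * ‖f (x - y)‖ₑ := by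
  refine (enorm_integral_le_lintegral_enorm _).trans_eq ?_
  rw [← lintegral_sub_left_eq_self _ x]
  simp only [enorm_mul, sub_sub_cancel]

theorem rpow_lintegral_conv_rpow_le {n : ℕ} {q : ℝ} (hq : 1 ≤ q) {g f : Rn n → ℝ≥0∞}
    (hg : Measurable g) (hf : Measurable f) :
    (∫⁻ x, (∫⁻ y, g y * f (x - y)) ^ q) ^ (1 / q) ≤
      (∫⁻ y, g y) * (∫⁻ x, f x ^ q) ^ (1 / q) := by
  have hq0 : 0 < q := by linarith
  calc (∫⁻ x, (∫⁻ y, g y * f (x - y)) ^ q) ^ (1 / q)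
      ≤ ∫⁻ y, (∫⁻ x, (g y * f (x - y)) ^ q) ^ (1 / q) :=
        lintegral_rpow_lintegral_le (F := fun y x => g y * f (x - y)) hq (by fun_prop)
    _ = ∫⁻ y, g y * (∫⁻ x, f x ^ q) ^ (1 / q) := by
        refine lintegral_congr fun y => ?_
        simp only [ENNReal.mul_rpow_of_nonneg _ _ hq0.le]
        rw [lintegral_const_mul _ (by fun_prop), lintegral_sub_right_eq_self (fun x => f x ^ q),
          ENNReal.mul_rpow_of_nonneg _ _ (by positivity), one_div, ENNReal.rpow_rpow_inv hq0.ne']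
    _ = _ := lintegral_mul_const _ hg

theorem eLpNorm_integral_conv_le {n : ℕ} {S : Type*} [MeasurableSpace S] {ν : Measure S}
    [SigmaFinite ν] {q : ℝ} (hq : 1 ≤ q) {g f : S → Rn n → ℝ}
    (hg : Measurable (Function.uncurry g)) (hf : Measurable (Function.uncurry f)) :
    eLpNorm (fun x => ∫ s, conv n (g s) (f s) x ∂ν) (ENNReal.ofReal q) volume ≤
      ∫⁻ s, (∫⁻ y, ‖g s y‖ₑ) * eLpNorm (f s) (ENNReal.ofReal q) volume ∂ν := by
  have hq0 : 0 < q := by linarith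
  have hmeas : Measurable (Function.uncurry fun s x => ∫⁻ y, ‖g s y‖ₑ * ‖f s (x - y)‖ₑ) := by
    refine Measurable.lintegral_prod_right' (f := fun z : (S × Rn n) × Rn n =>
      ‖g z.1.1 z.2‖ₑ * ‖f z.1.1 (z.1.2 - z.2)‖ₑ) ?_
    exact (hg.comp (by fun_prop : Measurable fun z : (S × Rn n) × Rn n => (z.1.1, z.2))).enorm.mul
      (hf.comp (by fun_prop : Measurable fun z : (S × Rn n) × Rn n =>
        (z.1.1, z.1.2 - z.2))).enorm
  simp only [eLpNorm_ofReal_eq_lintegral hq0]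
  calc (∫⁻ x, ‖∫ s, conv n (g s) (f s) x ∂ν‖ₑ ^ q) ^ (1 / q)
      ≤ (∫⁻ x, (∫⁻ s, (∫⁻ y, ‖g s y‖ₑ * ‖f s (x - y)‖ₑ) ∂ν) ^ q) ^ (1 / q) := by
        gcongr with x
        exact (enorm_integral_le_lintegral_enorm _).trans
          (lintegral_mono fun s => enorm_conv_le (g s) (f s) x)
    _ ≤ ∫⁻ s, (∫⁻ x, (∫⁻ y, ‖g s y‖ₑ * ‖f s (x - y)‖ₑ) ^ q) ^ (1 / q) ∂ν :=
        lintegral_rpow_lintegral_le hq hmeas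
    _ ≤ ∫⁻ s, (∫⁻ y, ‖g s y‖ₑ) * (∫⁻ y, ‖f s y‖ₑ ^ q) ^ (1 / q) ∂ν :=
        lintegral_mono fun s => rpow_lintegral_conv_rpow_le hq
          (hg.comp measurable_prodMk_left).enorm (hf.comp measurable_prodMk_left).enorm

end Convolution

section Fourier

variable {E F : Type*} [NormedAddCommGroup E] [InnerProductSpace ℝ E] [FiniteDimensional ℝ E]
  [MeasurableSpace E] [BorelSpace E] [NormedAddCommGroup F] [NormedSpace ℂ F]

theorem lintegral_comp_smul (h : E → ℝ≥0∞) {c : ℝ} (hc : c ≠ 0) :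
    ∫⁻ x, h (c • x) = ENNReal.ofReal |(c ^ Module.finrank ℝ E)⁻¹| * ∫⁻ x, h x := by
  rw [← (measurableEmbedding_const_smul₀ (α := E) hc).lintegral_map h,
    Measure.map_addHaar_smul _ hc, lintegral_smul_measure, smul_eq_mul]

theorem fourier_comp_smul (f : E → F) {c : ℝ} (hc : c ≠ 0) (x : E) :
    𝓕 (fun ξ => f (c • ξ)) x = |(c ^ Module.finrank ℝ E)⁻¹| • 𝓕 f (c⁻¹ • x) := by
  rw [Real.fourier_eq, Real.fourier_eq, ← Measure.integral_comp_smul volume _ c]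
  simp only [real_inner_smul_left, real_inner_smul_right, inv_mul_cancel_left₀ hc]

theorem lintegral_fourier_comp_smul (f : E → F) {c : ℝ} (hc : c ≠ 0) :
    ∫⁻ x, ‖𝓕 (fun ξ => f (c • ξ)) x‖ₑ = ∫⁻ x, ‖𝓕 f x‖ₑ := by
  simp only [fourier_comp_smul f hc, enorm_smul]
  rw [lintegral_const_mul' _ _ enorm_ne_top,
    lintegral_comp_smul (fun x => ‖𝓕 f x‖ₑ) (inv_ne_zero hc), ← mul_assoc,
    ← Real.enorm_eq_ofReal_abs, Real.enorm_abs, ← enorm_mul, inv_pow, inv_inv,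
    inv_mul_cancel₀ (pow_ne_zero _ hc), enorm_one, one_mul]

theorem integrable_fourier_of_contDiff {f : E → F} {N : ℕ} (hN : Module.finrank ℝ E < N)
    (hf : ContDiff ℝ N f) (h_int : ∀ m ≤ N, Integrable (iteratedFDeriv ℝ m f)) :
    Integrable (𝓕 f) := by
  have hfi : Integrable f := by
    rw [← integrable_norm_iff hf.continuous.aestronglyMeasurable]
    simpa only [norm_iteratedFDeriv_zero] using (h_int 0 N.zero_le).norm
  have hbound (m : ℕ) (hm : m ≤ N) : ∃ B, ∀ x, ‖x‖ ^ m * ‖𝓕 f x‖ ≤ B := by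
    have hmoments (k j : ℕ) (hk : k ≤ (0 : ℕ∞)) (hj : j ≤ (N : ℕ∞)) :
        Integrable fun v => ‖v‖ ^ k * ‖iteratedFDeriv ℝ j f v‖ := by
      obtain rfl : k = 0 := by simpa using hk
      simpa only [pow_zero, one_mul] using (h_int j (by exact_mod_cast hj)).norm
    have := Real.pow_mul_norm_iteratedFDeriv_fourier_le (mod_cast hf) hmoments (k := 0) le_rfl
      (Nat.cast_le.2 hm)
    simp only [norm_iteratedFDeriv_zero] at this
    exact ⟨_, this⟩
  obtain ⟨B₀, hB₀⟩ := hbound 0 N.zero_le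
  obtain ⟨B, hB⟩ := hbound N le_rfl
  have hdecay : Integrable fun x : E => 2 ^ (N - 1) * (B₀ + B) * (1 + ‖x‖) ^ (-(N : ℝ)) :=
    (integrable_one_add_norm (by exact_mod_cast hN)).const_mul _
  refine hdecay.mono' ?_ (Filter.Eventually.of_forall fun x => ?_)
  · exact (VectorFourier.fourierIntegral_continuous Real.continuous_fourierChar
      (by exact continuous_inner) hfi).aestronglyMeasurable
  · rw [Real.rpow_neg (by positivity), Real.rpow_natCast, ← div_eq_mul_inv,
      le_div_iff₀ (by positivity)]
    calc ‖𝓕 f x‖ * (1 + ‖x‖) ^ N ≤ ‖𝓕 f x‖ * (2 ^ (N - 1) * (1 ^ N + ‖x‖ ^ N)) := by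
          gcongr
          exact add_pow_le zero_le_one (norm_nonneg x) N
      _ = 2 ^ (N - 1) * (‖x‖ ^ 0 * ‖𝓕 f x‖ + ‖x‖ ^ N * ‖𝓕 f x‖) := by ring
      _ ≤ 2 ^ (N - 1) * (B₀ + B) := by
          gcongr
          · exact hB₀ x
          · exact hB x

theorem measurable_fourierChar_neg_inner :
    Measurable fun z : E × E => (Real.fourierChar (-inner ℝ z.1 z.2) : ℂ) :=
  Continuous.measurable (by fun_prop)

theorem measurable_fourier_uncurry {Y : Type*} [MeasurableSpace Y] {Φ : Y → E → ℂ}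
    (hΦ : Measurable (Function.uncurry Φ)) :
    Measurable (Function.uncurry fun y x => 𝓕 (Φ y) x) := by
  have hchar : Measurable fun w : (Y × E) × E => (Real.fourierChar (-inner ℝ w.2 w.1.2) : ℂ) :=
    measurable_fourierChar_neg_inner.comp
      (by fun_prop : Measurable fun w : (Y × E) × E => (w.2, w.1.2))
  have hval : Measurable fun w : (Y × E) × E => Φ w.1.1 w.2 :=
    hΦ.comp (by fun_prop : Measurable fun w : (Y × E) × E => (w.1.1, w.2))
  exact ((hchar.mul hval).stronglyMeasurable.integral_prod_right' (ν := volume)).measurable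

theorem fourier_integral_eq {Y : Type*} [MeasurableSpace Y] {ν : Measure Y} [SFinite ν]
    {Φ : Y → E → F} (hΦ : Integrable (Function.uncurry Φ) (ν.prod volume)) (x : E) :
    𝓕 (fun ξ => ∫ y, Φ y ξ ∂ν) x = ∫ y, 𝓕 (Φ y) x ∂ν := by
  simp only [Real.fourier_eq, Circle.smul_def, ← integral_smul]
  refine (integral_integral_swap ?_).symm
  refine hΦ.mono ?_ (Filter.Eventually.of_forall fun z => ?_)
  · exact (measurable_fourierChar_neg_inner.comp
      (measurable_snd.prodMk measurable_const)).aestronglyMeasurable.smul hΦ.1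
  · simp only [Function.uncurry, norm_smul, Circle.norm_coe, one_mul, le_refl]

theorem lintegral_fourier_integral_le {Y : Type*} [MeasurableSpace Y] {ν : Measure Y}
    [SFinite ν] {Φ : Y → E → ℂ} (hΦm : Measurable (Function.uncurry Φ))
    (hΦ : Integrable (Function.uncurry Φ) (ν.prod volume)) :
    ∫⁻ x, ‖𝓕 (fun ξ => ∫ y, Φ y ξ ∂ν) x‖ₑ ≤ ∫⁻ y, (∫⁻ x, ‖𝓕 (Φ y) x‖ₑ) ∂ν := by
  rw [lintegral_lintegral_swap (measurable_fourier_uncurry hΦm).enorm.aemeasurable]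
  refine lintegral_mono fun x => ?_
  rw [fourier_integral_eq hΦ]
  exact enorm_integral_le_lintegral_enorm _

theorem lintegral_fourier_integral_mul_comp_smul_le {Y : Type*} [MeasurableSpace Y] {ν : Measure Y}
    [SFinite ν] {a : Y → ℂ} {c : Y → ℝ} {ψ : E → ℂ} (ha : Measurable a) (hc : Measurable c)
    (hc0 : ∀ᵐ y ∂ν, c y ≠ 0) (hψm : Measurable ψ) (hψ : Integrable ψ)
    (hac : Integrable (fun y => |(c y ^ Module.finrank ℝ E)⁻¹| * ‖a y‖) ν) :
    ∫⁻ x, ‖𝓕 (fun ξ => ∫ y, a y * ψ (c y • ξ) ∂ν) x‖ₑ ≤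
      (∫⁻ y, ‖a y‖ₑ ∂ν) * ∫⁻ x, ‖𝓕 ψ x‖ₑ := by
  have hm : Measurable (Function.uncurry fun y ξ => a y * ψ (c y • ξ)) :=
    (ha.comp measurable_fst).mul
      (hψm.comp ((hc.comp measurable_fst).smul measurable_snd))
  have h_int : Integrable (Function.uncurry fun y ξ => a y * ψ (c y • ξ)) (ν.prod volume) := by
    rw [integrable_prod_iff hm.aestronglyMeasurable]
    refine ⟨hc0.mono fun y hy => (hψ.comp_smul hy).const_mul (a y), ?_⟩
    refine (hac.mul_const (∫ ξ, ‖ψ ξ‖)).congr (Filter.Eventually.of_forall fun y => ?_)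
    simp only [Function.uncurry, norm_mul, integral_const_mul]
    rw [Measure.integral_comp_smul volume (fun ξ => ‖ψ ξ‖), smul_eq_mul]
    ring
  calc ∫⁻ x, ‖𝓕 (fun ξ => ∫ y, a y * ψ (c y • ξ) ∂ν) x‖ₑ
      ≤ ∫⁻ y, (∫⁻ x, ‖𝓕 (fun ξ => a y * ψ (c y • ξ)) x‖ₑ) ∂ν :=
        lintegral_fourier_integral_le hm h_int
    _ = ∫⁻ y, ‖a y‖ₑ * (∫⁻ x, ‖𝓕 ψ x‖ₑ) ∂ν := by
        refine lintegral_congr_ae (hc0.mono fun y hy => ?_)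
        have hmul (x : E) : 𝓕 (fun ξ => a y * ψ (c y • ξ)) x =
            a y * 𝓕 (fun ξ => ψ (c y • ξ)) x := by
          simp only [Real.fourier_eq, Circle.smul_def, smul_eq_mul, mul_left_comm _ (a y),
            integral_const_mul]
        simp only [hmul, enorm_mul]
        rw [lintegral_const_mul' _ _ enorm_ne_top, lintegral_fourier_comp_smul ψ hy]
    _ = _ := lintegral_mul_const _ ha.enorm

end Fourier

section BochnerRiesz

theorem hasDerivAt_max_zero_pow (m : ℕ) (x : ℝ) :
    HasDerivAt (fun x : ℝ => max x 0 ^ (m + 2)) ((m + 2) * max x 0 ^ (m + 1)) x := by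
  rcases lt_trichotomy x 0 with hx | rfl | hx
  · rw [max_eq_right hx.le, zero_pow m.succ_ne_zero, mul_zero]
    refine (hasDerivAt_const x (0 : ℝ)).congr_of_eventuallyEq ?_
    filter_upwards [eventually_lt_nhds hx] with y hy
    rw [max_eq_right hy.le, zero_pow (by omega)]
  · have hO : (fun x : ℝ => max x 0 ^ (m + 2)) =O[nhds 0] fun x => ‖x - 0‖ ^ (m + 2) :=
      Asymptotics.isBigO_of_le _ fun y => by
        rw [norm_pow, norm_pow, norm_norm, sub_zero]
        gcongr
        simpa using abs_max_le_max_abs_abs (a := y) (b := 0)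
    simpa using (hO.hasFDerivAt (by omega)).hasDerivAt
  · rw [max_eq_left hx.le]
    have := hasDerivAt_pow (m + 2) x
    push_cast at this
    refine this.congr_of_eventuallyEq ?_
    filter_upwards [eventually_gt_nhds hx] with y hy
    rw [max_eq_left hy.le]

theorem contDiff_max_zero_pow (m : ℕ) : ContDiff ℝ m fun x : ℝ => max x 0 ^ (m + 1) := by
  induction m with
  | zero => exact contDiff_zero.2 (by fun_prop)
  | succ m ih =>
    have hderiv : deriv (fun x : ℝ => max x 0 ^ (m + 2)) =
        fun x : ℝ => (m + 2) * max x 0 ^ (m + 1) :=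
      funext fun x => (hasDerivAt_max_zero_pow m x).deriv
    push_cast
    rw [contDiff_succ_iff_deriv]
    refine ⟨fun x => (hasDerivAt_max_zero_pow m x).differentiableAt, by simp, ?_⟩
    rw [hderiv]
    exact contDiff_const.mul ih

variable {E : Type*} [NormedAddCommGroup E]

/-- The Bochner–Riesz symbol `ξ ↦ (1 - ‖ξ‖²)₊ᵏ`, complex-valued so that it has a Fourier transform;
its dilates are the building blocks of radial symbols in `radial_eq_integral_bochnerRiesz`. -/
def bochnerRiesz (k : ℕ) (ξ : E) : ℂ := ((max (1 - ‖ξ‖ ^ 2) 0 ^ k : ℝ) : ℂ)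

theorem hasCompactSupport_bochnerRiesz [ProperSpace E] (k : ℕ) :
    HasCompactSupport (bochnerRiesz (k + 1) : E → ℂ) := by
  refine HasCompactSupport.intro (isCompact_closedBall 0 1) fun ξ hξ => ?_
  have : 1 < ‖ξ‖ := by simpa using hξ
  rw [bochnerRiesz, max_eq_right (by nlinarith), zero_pow k.succ_ne_zero, Complex.ofReal_zero]

variable [InnerProductSpace ℝ E]

theorem contDiff_bochnerRiesz (k : ℕ) : ContDiff ℝ k (bochnerRiesz (k + 1) : E → ℂ) :=
  Complex.ofRealCLM.contDiff.comp
    ((contDiff_max_zero_pow k).comp (contDiff_const.sub (contDiff_norm_sq ℝ)))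

variable [FiniteDimensional ℝ E] [MeasurableSpace E] [BorelSpace E]

theorem integrable_fourier_bochnerRiesz {k : ℕ} (hk : Module.finrank ℝ E < k) :
    Integrable (𝓕 (bochnerRiesz (k + 1) : E → ℂ)) :=
  integrable_fourier_of_contDiff hk (contDiff_bochnerRiesz k) fun m hm =>
    ((contDiff_bochnerRiesz k).continuous_iteratedFDeriv (by exact_mod_cast hm)
      ).integrable_of_hasCompactSupport ((hasCompactSupport_bochnerRiesz k).iteratedFDeriv m)

end BochnerRiesz

section TaylorAtTop

open scoped Nat

variable {P : ℕ → ℝ → ℝ} {k : ℕ} {r : ℝ}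

theorem integrableOn_sub_pow_mul {g : ℝ → ℝ} (hr : 0 ≤ r)
    (hg : IntegrableOn (fun s => s ^ k * g s) (Ioi 0)) :
    IntegrableOn (fun s => (s - r) ^ k * g s) (Ioi r) := by
  have hbdd : ∀ᵐ s ∂volume.restrict (Ioi r), ‖((s - r) / s) ^ k‖ ≤ 1 := by
    filter_upwards [ae_restrict_mem measurableSet_Ioi] with s (hs : r < s)
    have hs0 : 0 < s := hr.trans_lt hs
    rw [norm_pow, Real.norm_of_nonneg (div_nonneg (sub_nonneg.2 hs.le) hs0.le)]
    exact pow_le_one₀ (div_nonneg (sub_nonneg.2 hs.le) hs0.le)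
      ((div_le_one hs0).2 (sub_le_self s hr))
  refine ((hg.mono_set (Ioi_subset_Ioi hr)).bdd_mul
    (by fun_prop : Measurable _).aestronglyMeasurable hbdd).congr ?_
  filter_upwards [ae_restrict_mem measurableSet_Ioi] with s (hs : r < s)
  have hs0 : s ≠ 0 := (hr.trans_lt hs).ne'
  rw [← mul_assoc, ← mul_pow, div_mul_cancel₀ _ hs0]

theorem tendsto_sub_pow_mul_zero {g : ℝ → ℝ} (hr : 0 ≤ r)
    (hg : Filter.Tendsto (fun s => s ^ k * g s) Filter.atTop (nhds 0)) :
    Filter.Tendsto (fun s => (s - r) ^ k * g s) Filter.atTop (nhds 0) := by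
  refine squeeze_zero_norm' ?_ (by simpa only [norm_zero] using hg.norm)
  filter_upwards [Filter.eventually_ge_atTop r] with s hs
  rw [norm_mul, norm_mul, norm_pow, norm_pow, Real.norm_of_nonneg (sub_nonneg.2 hs),
    Real.norm_of_nonneg (hr.trans hs)]
  gcongr
  exact sub_le_self s hr

theorem taylor_at_top (hr : 0 < r) (hderiv : ∀ j ≤ k, ∀ s > 0, HasDerivAt (P j) (P (j + 1) s) s)
    (hlim : ∀ j ≤ k, Filter.Tendsto (fun s => s ^ j * P j s) Filter.atTop (nhds 0))
    (h_int : ∀ j ≤ k, IntegrableOn (fun s => s ^ j * P (j + 1) s) (Ioi 0)) :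
    P 0 r = (-1) ^ (k + 1) / k ! * ∫ s in Ioi r, (s - r) ^ k * P (k + 1) s := by
  induction k with
  | zero =>
    have hFTC := integral_Ioi_of_hasDerivAt_of_tendsto' (f := P 0) (f' := P 1) (a := r)
      (fun s hs => hderiv 0 le_rfl s (hr.trans_le hs))
      (by simpa using integrableOn_sub_pow_mul hr.le (h_int 0 le_rfl))
      (by simpa using hlim 0 le_rfl)
    simp [hFTC]
  | succ k ih =>
    have hcont : Filter.Tendsto (fun s => (s - r) ^ (k + 1) * P (k + 1) s) (nhdsWithin r (Ioi r))
        (nhds 0) := by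
      have : ContinuousAt (fun s => (s - r) ^ (k + 1) * P (k + 1) s) r :=
        (by fun_prop : ContinuousAt (fun s => (s - r) ^ (k + 1)) r).mul
          (hderiv (k + 1) le_rfl r hr).continuousAt
      simpa using this.tendsto.mono_left nhdsWithin_le_nhds
    have hparts := integral_Ioi_mul_deriv_eq_deriv_mul (a := r)
      (u := fun s => (s - r) ^ (k + 1)) (u' := fun s => (k + 1) * (s - r) ^ k)
      (v := P (k + 1)) (v' := P (k + 2))
      (fun s _ => by simpa using ((hasDerivAt_id s).sub_const r).fun_pow (k + 1))
      (fun s hs => hderiv (k + 1) le_rfl s (hr.trans hs))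
      (integrableOn_sub_pow_mul hr.le (h_int (k + 1) le_rfl))
      (by simpa only [mul_assoc, Pi.mul_def, IntegrableOn] using
        (integrableOn_sub_pow_mul hr.le (h_int k k.le_succ)).const_mul ((k : ℝ) + 1))
      hcont (tendsto_sub_pow_mul_zero hr.le (hlim (k + 1) le_rfl))
    rw [ih (fun j hj => hderiv j (by omega)) (fun j hj => hlim j (by omega))
      (fun j hj => h_int j (by omega)), hparts]
    simp only [mul_assoc, integral_const_mul, Nat.factorial_succ, Nat.cast_mul, Nat.cast_succ]
    field_simp
    ring

theorem integral_Ioi_sub_pow_mul (hr : 0 ≤ r) (hk : k ≠ 0) (g : ℝ → ℝ) :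
    ∫ s in Ioi r, (s - r) ^ k * g s =
      ∫ s in Ioi 0, s ^ k * g s * max (1 - r / s) 0 ^ k := by
  rw [setIntegral_eq_of_subset_of_forall_sdiff_eq_zero (s := Ioi r) measurableSet_Ioi
    (Ioi_subset_Ioi hr)]
  · refine setIntegral_congr_fun measurableSet_Ioi fun s (hs : r < s) => ?_
    have hs0 : 0 < s := hr.trans_lt hs
    have hrs : r / s ≤ 1 := (div_le_one hs0).2 hs.le
    rw [max_eq_left (sub_nonneg.2 hrs), mul_right_comm, ← mul_pow, mul_sub,
      mul_div_cancel₀ _ hs0.ne', mul_one]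
  · rintro s ⟨hs0 : 0 < s, hsr : ¬r < s⟩
    rw [max_eq_right (sub_nonpos.2 ((one_le_div hs0).2 (not_lt.1 hsr))), zero_pow hk, mul_zero]

end TaylorAtTop

section RadialSymbol

open scoped Nat

variable {E : Type*} [NormedAddCommGroup E] [InnerProductSpace ℝ E] {P : ℕ → ℝ → ℝ} {k : ℕ}

theorem bochnerRiesz_inv_sqrt_smul {s : ℝ} (hs : 0 < s) (ξ : E) :
    bochnerRiesz k ((√s)⁻¹ • ξ) = ((max (1 - ‖ξ‖ ^ 2 / s) 0 ^ k : ℝ) : ℂ) := by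
  rw [bochnerRiesz, norm_smul, mul_pow, norm_inv, inv_pow, Real.norm_of_nonneg (Real.sqrt_nonneg s),
    Real.sq_sqrt hs.le, inv_mul_eq_div]

theorem radial_eq_integral_bochnerRiesz (hk : k ≠ 0)
    (hderiv : ∀ j ≤ k, ∀ s > 0, HasDerivAt (P j) (P (j + 1) s) s)
    (hlim : ∀ j ≤ k, Filter.Tendsto (fun s => s ^ j * P j s) Filter.atTop (nhds 0))
    (h_int : ∀ j ≤ k, IntegrableOn (fun s => s ^ j * P (j + 1) s) (Ioi 0)) {ξ : E} (hξ : ξ ≠ 0) :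
    (P 0 (‖ξ‖ ^ 2) : ℂ) = ∫ s in Ioi (0 : ℝ),
      (((-1) ^ (k + 1) / k ! * (s ^ k * P (k + 1) s) : ℝ) : ℂ) *
        bochnerRiesz k ((√s)⁻¹ • ξ) := by
  have hr : 0 < ‖ξ‖ ^ 2 := by positivity
  rw [taylor_at_top hr hderiv hlim h_int, integral_Ioi_sub_pow_mul hr.le hk, ← integral_const_mul,
    ← integral_complex_ofReal]
  refine setIntegral_congr_fun measurableSet_Ioi fun s (hs : 0 < s) => ?_
  rw [bochnerRiesz_inv_sqrt_smul hs]
  push_cast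
  ring

variable [FiniteDimensional ℝ E] [Nontrivial E] [MeasurableSpace E] [BorelSpace E]

theorem lintegral_fourier_radial_ne_top (hk : Module.finrank ℝ E < k)
    (hderiv : ∀ j ≤ k + 1, ∀ s > 0, HasDerivAt (P j) (P (j + 1) s) s)
    (hlim : ∀ j ≤ k + 1, Filter.Tendsto (fun s => s ^ j * P j s) Filter.atTop (nhds 0))
    (h_int : ∀ j ≤ k + 1, IntegrableOn (fun s => s ^ j * P (j + 1) s) (Ioi 0))
    (hm : Measurable (P (k + 2)))
    (hmoment : IntegrableOn
      (fun s => √s ^ Module.finrank ℝ E * (s ^ (k + 1) * P (k + 2) s)) (Ioi 0)) :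
    ∫⁻ x : E, ‖𝓕 (fun ξ : E => (P 0 (‖ξ‖ ^ 2) : ℂ)) x‖ₑ ≠ ⊤ := by
  set a : ℝ → ℂ := fun s =>
    (((-1) ^ (k + 2) / (k + 1)! * (s ^ (k + 1) * P (k + 2) s) : ℝ) : ℂ) with ha
  have hsuperposition : (fun ξ : E => (P 0 (‖ξ‖ ^ 2) : ℂ)) =ᵐ[volume]
      fun ξ => ∫ s in Ioi (0 : ℝ), a s * bochnerRiesz (k + 1) ((√s)⁻¹ • ξ) := by
    filter_upwards [Measure.ae_ne volume 0] with ξ hξ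
    exact radial_eq_integral_bochnerRiesz k.succ_ne_zero hderiv hlim h_int hξ
  have ha_int : IntegrableOn a (Ioi 0) := ((h_int (k + 1) le_rfl).const_mul _).ofReal
  have hac : IntegrableOn (fun s => |((√s)⁻¹ ^ Module.finrank ℝ E)⁻¹| * ‖a s‖) (Ioi 0) := by
    refine (hmoment.norm.const_mul ‖((-1) ^ (k + 2) / (k + 1)! : ℝ)‖).congr
      (Filter.Eventually.of_forall fun s => ?_)
    simp only [ha, Complex.norm_real, norm_mul, inv_pow, inv_inv, Real.norm_eq_abs]
    ring
  have hc0 : ∀ᵐ s ∂volume.restrict (Ioi (0 : ℝ)), (√s)⁻¹ ≠ 0 := by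
    filter_upwards [ae_restrict_mem measurableSet_Ioi] with s (hs : 0 < s)
    positivity
  have hcont := (contDiff_bochnerRiesz (E := E) k).continuous
  simp_rw [Real.fourier_congr_ae hsuperposition]
  refine ne_top_of_le_ne_top (ENNReal.mul_ne_top ha_int.2.ne
    (integrable_fourier_bochnerRiesz hk).2.ne)
    (lintegral_fourier_integral_mul_comp_smul_le (by fun_prop) (by fun_prop) hc0 hcont.measurable
      (hcont.integrable_of_hasCompactSupport (hasCompactSupport_bochnerRiesz k)) hac)

end RadialSymbol

section StretchedExponential

open Polynomial

/-- The polynomials `Q_j` for which the `j`-th derivative of the stretched exponential `exp (-s^α)`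
is `s⁻ʲ Q_j(s^α) exp (-s^α)` on `s > 0`. -/
def stretchedExpPoly (α : ℝ) : ℕ → ℝ[X]
  | 0 => 1
  | j + 1 => C α * X * derivative (stretchedExpPoly α j) -
      (C (j : ℝ) + C α * X) * stretchedExpPoly α j

/-- The `j`-th derivative of the stretched exponential `exp (-s^α)`, for `s > 0`; the explicit
formula makes its decay at infinity and its integrability near `0` visible. -/
def stretchedExpDeriv (α : ℝ) (j : ℕ) (s : ℝ) : ℝ :=
  (s ^ j)⁻¹ * ((stretchedExpPoly α j).eval (s ^ α) * Real.exp (-s ^ α))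

variable {α : ℝ}

theorem stretchedExpDeriv_zero (s : ℝ) : stretchedExpDeriv α 0 s = Real.exp (-s ^ α) := by
  simp [stretchedExpDeriv, stretchedExpPoly]

theorem measurable_stretchedExpDeriv (j : ℕ) : Measurable (stretchedExpDeriv α j) := by
  have := (stretchedExpPoly α j).continuous.measurable
  unfold stretchedExpDeriv
  fun_prop

theorem X_dvd_stretchedExpPoly_succ (j : ℕ) : X ∣ stretchedExpPoly α (j + 1) := by
  induction j with
  | zero => simp [stretchedExpPoly]
  | succ j ih =>
    rw [stretchedExpPoly, mul_right_comm]
    exact (Dvd.intro_left _ rfl).sub (ih.mul_left _)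

theorem hasDerivAt_stretchedExpDeriv (j : ℕ) {s : ℝ} (hs : 0 < s) :
    HasDerivAt (stretchedExpDeriv α j) (stretchedExpDeriv α (j + 1) s) s := by
  have hrpow : HasDerivAt (fun s : ℝ => s ^ α) (α * s ^ α / s) s := by
    simpa only [Real.rpow_sub_one hs.ne', mul_div_assoc] using
      Real.hasDerivAt_rpow_const (p := α) (Or.inl hs.ne')
  have hpow : HasDerivAt (fun s : ℝ => (s ^ j)⁻¹) (-j * (s ^ (j + 1))⁻¹) s := by
    refine ((hasDerivAt_pow j s).inv (pow_ne_zero j hs.ne')).congr_deriv ?_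
    rcases j with _ | j
    · simp
    · rw [Nat.add_sub_cancel]
      field_simp
      ring
  have hQ := ((stretchedExpPoly α j).hasDerivAt (s ^ α)).comp s hrpow
  refine (hpow.mul (hQ.mul hrpow.fun_neg.exp)).congr_deriv ?_
  simp only [stretchedExpDeriv, stretchedExpPoly, eval_sub, eval_mul, eval_add, eval_C, eval_X,
    Function.comp_apply, Pi.mul_apply, pow_succ]
  field_simp
  ring

theorem pow_mul_stretchedExpDeriv (j : ℕ) {s : ℝ} (hs : 0 < s) :
    s ^ j * stretchedExpDeriv α j s =
      (stretchedExpPoly α j).eval (s ^ α) * Real.exp (-s ^ α) :=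
  mul_inv_cancel_left₀ (pow_ne_zero j hs.ne') _

theorem tendsto_pow_mul_stretchedExpDeriv (hα : 0 < α) (j : ℕ) :
    Filter.Tendsto (fun s => s ^ j * stretchedExpDeriv α j s) Filter.atTop (nhds 0) := by
  refine ((stretchedExpPoly α j).tendsto_div_exp_atTop.comp
    (tendsto_rpow_atTop hα)).congr' ?_
  filter_upwards [Filter.eventually_gt_atTop 0] with s hs
  rw [pow_mul_stretchedExpDeriv j hs, Real.exp_neg, Function.comp_apply, div_eq_mul_inv]

theorem integrableOn_rpow_mul_eval_mul_exp_neg_rpow (hα : 0 < α) {b : ℝ} (hb : -1 < b) (R : ℝ[X]) :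
    IntegrableOn (fun s => s ^ b * (R.eval (s ^ α) * Real.exp (-s ^ α))) (Ioi 0) := by
  induction R using Polynomial.induction_on' with
  | add R S hR hS =>
    simp only [eval_add, add_mul, mul_add]
    exact hR.add hS
  | monomial m c =>
    have hexp : -1 < b + α * m := by nlinarith [m.cast_nonneg (α := ℝ)]
    refine IntegrableOn.congr_fun ((integrableOn_rpow_mul_exp_neg_rpow hexp hα).const_mul c)
      (fun s (hs : 0 < s) => ?_) measurableSet_Ioi
    simp only [eval_monomial, Real.rpow_add hs, Real.rpow_mul hs.le, Real.rpow_natCast]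
    ring

theorem integrableOn_rpow_mul_pow_mul_stretchedExpDeriv (hα : 0 < α) (j : ℕ) {c : ℝ} (hc : 0 ≤ c) :
    IntegrableOn (fun s => s ^ c * (s ^ j * stretchedExpDeriv α (j + 1) s)) (Ioi 0) := by
  obtain ⟨R, hR⟩ := X_dvd_stretchedExpPoly_succ (α := α) j
  refine (integrableOn_rpow_mul_eval_mul_exp_neg_rpow hα (b := c + α - 1) (by linarith) R).congr_fun
    (fun s (hs : 0 < s) => ?_) measurableSet_Ioi
  have := pow_mul_stretchedExpDeriv (α := α) (j + 1) hs
  rw [hR, eval_mul, eval_X] at this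
  beta_reduce
  rw [Real.rpow_sub_one hs.ne', Real.rpow_add hs]
  field_simp
  linear_combination -this

theorem lintegral_fourier_exp_neg_rpow_ne_top {E : Type*} [NormedAddCommGroup E]
    [InnerProductSpace ℝ E] [FiniteDimensional ℝ E] [Nontrivial E] [MeasurableSpace E]
    [BorelSpace E] (hα : 0 < α) :
    ∫⁻ x : E, ‖𝓕 (fun ξ : E => (Real.exp (-(‖ξ‖ ^ 2) ^ α) : ℂ)) x‖ₑ ≠ ⊤ := by
  simp only [← stretchedExpDeriv_zero]
  refine lintegral_fourier_radial_ne_top (Nat.lt_succ_self _)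
    (fun j _ s hs => hasDerivAt_stretchedExpDeriv j hs)
    (fun j _ => tendsto_pow_mul_stretchedExpDeriv hα j)
    (fun j _ => by simpa using integrableOn_rpow_mul_pow_mul_stretchedExpDeriv hα j le_rfl)
    (measurable_stretchedExpDeriv _) ?_
  have hmoment := integrableOn_rpow_mul_pow_mul_stretchedExpDeriv hα (Module.finrank ℝ E + 2)
    (c := Module.finrank ℝ E / 2) (by positivity)
  refine hmoment.congr_fun (fun s (hs : 0 < s) => ?_) measurableSet_Ioi
  rw [← Real.rpow_natCast, ← Real.rpow_div_two_eq_sqrt _ hs.le]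

end StretchedExponential

section HeatKernel

variable {n : ℕ} {α : ℝ}

theorem enorm_gKer_le (t : ℝ) (x : Rn n) :
    ‖gKer n α t x‖ₑ ≤ ‖𝓕 (fun ξ : Rn n => (Real.exp (-t * ‖ξ‖ ^ (2 * α)) : ℂ)) (-x)‖ₑ := by
  rw [gKer, Real.fourierInv_eq_fourier_neg, enorm_le_iff_norm_le]
  exact Complex.abs_re_le_norm _

theorem exp_neg_mul_norm_rpow_eq {E : Type*} [NormedAddCommGroup E] [NormedSpace ℝ E]
    (hα : α ≠ 0) {t : ℝ} (ht : 0 < t) (ξ : E) :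
    Real.exp (-t * ‖ξ‖ ^ (2 * α)) = Real.exp (-(‖t ^ (1 / (2 * α)) • ξ‖ ^ 2) ^ α) := by
  have hs : 0 ≤ t ^ (1 / (2 * α)) := Real.rpow_nonneg ht.le _
  rw [norm_smul, Real.norm_of_nonneg hs, ← Real.rpow_two, ← Real.rpow_mul (by positivity),
    Real.mul_rpow hs (norm_nonneg _), ← Real.rpow_mul ht.le,
    one_div_mul_cancel (mul_ne_zero two_ne_zero hα), Real.rpow_one, neg_mul]

theorem exists_lintegral_gKer_le (hn : 1 ≤ n) (hα : 0 < α) :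
    ∃ G : ℝ≥0∞, G ≠ ⊤ ∧ ∀ t > 0, ∫⁻ x, ‖gKer n α t x‖ₑ ≤ G := by
  have : Nonempty (Fin n) := ⟨⟨0, hn⟩⟩
  refine ⟨_, lintegral_fourier_exp_neg_rpow_ne_top (E := Rn n) hα, fun t ht => ?_⟩
  have hscale : t ^ (1 / (2 * α)) ≠ 0 := (Real.rpow_pos_of_pos ht _).ne'
  calc ∫⁻ x, ‖gKer n α t x‖ₑ
      ≤ ∫⁻ x, ‖𝓕 (fun ξ : Rn n => (Real.exp (-t * ‖ξ‖ ^ (2 * α)) : ℂ)) (-x)‖ₑ :=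
        lintegral_mono (enorm_gKer_le t)
    _ = ∫⁻ x, ‖𝓕 (fun ξ : Rn n => (Real.exp (-t * ‖ξ‖ ^ (2 * α)) : ℂ)) x‖ₑ :=
        lintegral_neg_eq_self fun x =>
          ‖𝓕 (fun ξ : Rn n => (Real.exp (-t * ‖ξ‖ ^ (2 * α)) : ℂ)) x‖ₑ
    _ = ∫⁻ x, ‖𝓕 (fun ξ : Rn n => (Real.exp (-(‖ξ‖ ^ 2) ^ α) : ℂ)) x‖ₑ := by
        simp only [exp_neg_mul_norm_rpow_eq hα.ne' ht]
        exact lintegral_fourier_comp_smul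
          (fun ξ : Rn n => (Real.exp (-(‖ξ‖ ^ 2) ^ α) : ℂ)) hscale

theorem measurable_gKer : Measurable (Function.uncurry (gKer n α)) := by
  have hsymbol : Measurable (Function.uncurry fun (t : ℝ) (ξ : Rn n) =>
      (Real.exp (-t * ‖ξ‖ ^ (2 * α)) : ℂ)) := by
    simp only [Function.uncurry_def]
    fun_prop
  have hneg : Measurable fun z : ℝ × Rn n => (z.1, -z.2) := by fun_prop
  convert Complex.measurable_re.comp ((measurable_fourier_uncurry hsymbol).comp hneg) using 1
  ext z
  simp only [Function.uncurry_def, Function.comp_apply, gKer, Real.fourierInv_eq_fourier_neg]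

theorem exists_eLpNorm_duhamel_le (hn : 1 ≤ n) (hα : 0 < α) {q : ℝ} (hq : 1 ≤ q)
    {qb : Rn n → ℝ} (hqb : IsPembq n q qb) :
    ∃ K : ℝ≥0∞, K ≠ ⊤ ∧ ∀ f : ℝ → Rn n → ℝ, Measurable (Function.uncurry f) → ∀ t : ℝ,
      eLpNorm (fun x => ∫ s in Ioc (0 : ℝ) t, conv n (gKer n α (t - s)) (f s) x)
        (ENNReal.ofReal q) volume ≤ K * ∫⁻ s in Ioi (0 : ℝ), luxNormR volume qb (f s) := by
  obtain ⟨G, hG, hGle⟩ := exists_lintegral_gKer_le hn hα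
  obtain ⟨K, hK, hKle⟩ := hqb.eLpNorm_le_luxNormR hn (one_pos.trans_le hq)
  refine ⟨G * K, ENNReal.mul_ne_top hG hK, fun f hf t => ?_⟩
  have hg : Measurable (Function.uncurry fun s => gKer n α (t - s)) :=
    measurable_gKer.comp (by fun_prop : Measurable fun z : ℝ × Rn n => (t - z.1, z.2))
  rw [← restrict_Ioo_eq_restrict_Ioc]
  calc eLpNorm (fun x => ∫ s in Ioo (0 : ℝ) t, conv n (gKer n α (t - s)) (f s) x)
        (ENNReal.ofReal q) volume
      ≤ ∫⁻ s in Ioo (0 : ℝ) t,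
          (∫⁻ y, ‖gKer n α (t - s) y‖ₑ) * eLpNorm (f s) (ENNReal.ofReal q) volume :=
        eLpNorm_integral_conv_le hq hg hf
    _ ≤ ∫⁻ s in Ioo (0 : ℝ) t, G * K * luxNormR volume qb (f s) := by
        refine setLIntegral_mono' measurableSet_Ioo fun s hs => ?_
        rw [mul_assoc]
        gcongr
        · exact hGle _ (sub_pos.2 hs.2)
        · exact hKle _
    _ = G * K * ∫⁻ s in Ioo (0 : ℝ) t, luxNormR volume qb (f s) :=
        lintegral_const_mul' _ _ (ENNReal.mul_ne_top hG hK)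
    _ ≤ G * K * ∫⁻ s in Ioi (0 : ℝ), luxNormR volume qb (f s) := by
        gcongr
        exact Ioo_subset_Ioi_self

end HeatKernel

section MixedNorm

theorem eNormT_le_of_forall_eLpNorm_le {n : ℕ} {p : ℝ → ℝ} {q T : ℝ} {u : ℝ → Rn n → ℝ}
    {B : ℝ≥0∞} (hT : 0 < T) (hp1 : ∀ t ∈ Ici (0 : ℝ), 1 ≤ p t)
    (hpplus : ∃ M : ℝ, ∀ᵐ t ∂(volume.restrict (Ici (0 : ℝ))), p t ≤ M)
    (hu : ∀ t, eLpNorm (u t) (ENNReal.ofReal q) volume ≤ B) :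
    eNormT n p q T u ≤ ENNReal.ofReal (max (T ^ (1 / essInf p (volume.restrict (Ici (0 : ℝ)))))
      (T ^ (1 / essSup p (volume.restrict (Ici (0 : ℝ)))))) * B := by
  set μ := volume.restrict (Ici (0 : ℝ))
  have hone : ∀ᵐ t ∂μ, 1 ≤ p t := (ae_restrict_mem measurableSet_Ici).mono hp1
  obtain ⟨M, hM⟩ := hpplus
  have hlow : ∀ᵐ t ∂μ, essInf p μ ≤ p t := ae_essInf_le ⟨1, hone⟩
  have hupp : ∀ᵐ t ∂μ, p t ≤ essSup p μ := ae_le_essSup ⟨M, hM⟩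
  have hle : volume.restrict (Ioc (0 : ℝ) T) ≤ μ :=
    Measure.restrict_mono (fun t ht => ht.1.le) le_rfl
  have : (ae μ).NeBot := ae_restrict_neBot.2 (by simp)
  have hinf : 0 < essInf p μ := one_pos.trans_le
    (le_essInf_of_ae_le 1 hone (Filter.IsBoundedUnder.isCoboundedUnder_ge ⟨M, hM⟩))
  refine (luxNorm_le_of_ae_le hinf (ae_mono hle hlow) (ae_mono hle hupp)
    (Filter.Eventually.of_forall hu)).trans_eq ?_
  rw [Measure.restrict_apply_univ, Real.volume_Ioc, sub_zero, ENNReal.ofReal_rpow_of_pos hT,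
    ENNReal.ofReal_rpow_of_pos hT, ENNReal.ofReal_max]

end MixedNorm

theorem stmt11_general (n : ℕ) (hn : 1 ≤ n) (α : ℝ) (hα : 0 < α)
    (q : ℝ) (hq : 1 ≤ q) (qb : Rn n → ℝ) (hqb : IsPembq n q qb)
    (p : ℝ → ℝ) (hp1 : ∀ t ∈ Ici (0 : ℝ), 1 ≤ p t)
    (hpplus : ∃ M : ℝ, ∀ᵐ t ∂(volume.restrict (Ici (0 : ℝ))), p t ≤ M) :
    ∃ C > (0 : ℝ), ∀ T > (0 : ℝ), ∀ f : ℝ → Rn n → ℝ, Measurable (Function.uncurry f) →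
      eNormT n p q T (fun t x => ∫ s in Ioc (0 : ℝ) t, conv n (gKer n α (t - s)) (f s) x)
        ≤ ENNReal.ofReal (C * max (T ^ (1 / essInf p (volume.restrict (Ici (0 : ℝ)))))
            (T ^ (1 / essSup p (volume.restrict (Ici (0 : ℝ))))))
          * ∫⁻ s in Ioi (0 : ℝ), luxNormR volume qb (f s) := by
  obtain ⟨K, hK, hKle⟩ := exists_eLpNorm_duhamel_le hn hα hq hqb
  refine ⟨K.toReal + 1, by positivity, fun T hT f hf => ?_⟩
  have hKC : K ≤ ENNReal.ofReal (K.toReal + 1) :=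
    (ENNReal.le_ofReal_iff_toReal_le hK (by positivity)).2 (by linarith)
  refine (eNormT_le_of_forall_eLpNorm_le hT hp1 hpplus (hKle f hf)).trans ?_
  rw [mul_comm (K.toReal + 1), ENNReal.ofReal_mul (by positivity), mul_assoc]
  gcongr

/-- Control of the external force term in `E_T`:
`‖∫_0^t 𝔤_{t−s}^α ∗ f(s,·) ds‖_{E_T} ≤ C max{T^{1/p⁻}, T^{1/p⁺}} ‖f‖_{L^1_t L^{q̄(·)}_x}`. -/
theorem stmt11 (n : ℕ) (hn : 1 ≤ n) (α : ℝ) (hα : 0 < α)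
    (q : ℝ) (hq : 1 < q) (qb : Rn n → ℝ) (hqb : IsPembq n q qb)
    (p : ℝ → ℝ) (hpm : Measurable p) (hp1 : ∀ t ∈ Ici (0:ℝ), 1 ≤ p t)
    (hpminus : 1 < essInf p (volume.restrict (Ici (0:ℝ))))
    (hpplus : ∃ M : ℝ, ∀ᵐ t ∂(volume.restrict (Ici (0:ℝ))), p t ≤ M) :
    ∃ C > (0:ℝ), ∀ T > (0:ℝ), ∀ f : ℝ → Rn n → ℝ, Measurable (Function.uncurry f) →
      (∫⁻ s in Ioi (0:ℝ), luxNormR volume qb (f s)) < ⊤ →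
      eNormT n p q T (fun t x => ∫ s in Ioc (0:ℝ) t, conv n (gKer n α (t - s)) (f s) x)
        ≤ ENNReal.ofReal (C * max (T ^ (1 / essInf p (volume.restrict (Ici (0:ℝ)))))
            (T ^ (1 / essSup p (volume.restrict (Ici (0:ℝ))))))
          * ∫⁻ s in Ioi (0:ℝ), luxNormR volume qb (f s) := by
  obtain ⟨C, hC, hle⟩ := stmt11_general n hn α hα q hq.le qb hqb p hp1 hpplus
  exact ⟨C, hC, fun T hT f hf _ => hle T hT f hf⟩
end
end

section
/- Let n ≥ 1, q ∈ (1,∞), let p(·) ∈ P^log(ℝ^n) with 1 < p⁻ ≤ p⁺ < ∞, and let β satisfy 0 < β < min{n/p⁺, n/q}. Define the variable exponent r(·) = n·p(·)/(n − βq). Then there exists a constant C > 0 such that for every f ∈ L^{p(·)}(ℝ^n) ∩ L^q(ℝ^n): ‖I_β(f)‖_{L^{r(·)}(ℝ^n)} ≤ C · max{‖f‖_{L^{p(·)}(ℝ^n)}, ‖f‖_{L^q(ℝ^n)}}. -/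
open MeasureTheory Set
open scoped ENNReal

noncomputable section

/-- The Riesz potential `I_β(f)(x) = ∫ |f(y)| |x−y|^{β−n} dy`, valued in `[0,∞]`. -/
def rieszPot (n : ℕ) (β : ℝ) (f : Rn n → ℝ) (x : Rn n) : ℝ≥0∞ :=
  ∫⁻ y, ENNReal.ofReal |f y| * ENNReal.ofReal (‖x - y‖ ^ (β - (n:ℝ)))

/-!
Let `M` be the maximal operator. If `‖g‖_q ≤ 1`, then `I_β g ≤ K (M g)^(1 - βq/n)` pointwise
(Hedberg): write `I_β g (x)` as an integral of averages of `g` over balls around `x`, and bound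
these by `M g x` for small radii and by Hölder's inequality for large ones. As `r (1 - βq/n) = p`,
it remains to bound `M` on `L^{p(·)}`. Log-Hölder continuity of `1/p` allows exchanging `p(x)` and
`p(y)` on a ball at the cost of an integrable error, which gives Jensen's inequality for averages,
hence a pointwise bound of `(γ M g)^p` by `M (g^p)`, up to that error. Applied to `p/p⁻` in place
of `p`, this bound can be raised to the power `p⁻ > 1`, and the strong type `(p⁻, p⁻)` of `M`
concludes.
-/

open Metric Module
open scoped NNReal Topology

section Lebesgue

lemma add_rpow_le_two_mul_rpow_add_two_mul_rpow (a b : ℝ≥0∞) {s : ℝ} (hs : 0 ≤ s) :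
    (a + b) ^ s ≤ (2 * a) ^ s + (2 * b) ^ s := by
  rcases le_total a b with h | h
  · exact (ENNReal.rpow_le_rpow (by rw [two_mul]; gcongr) hs).trans le_add_self
  · exact (ENNReal.rpow_le_rpow (by rw [two_mul]; gcongr) hs).trans le_self_add

lemma indicator_rpow {α : Type*} {p : α → ℝ} (hp : ∀ x, 0 < p x) (s : Set α) (f : α → ℝ≥0∞)
    (x : α) : s.indicator f x ^ p x = s.indicator (fun x => f x ^ p x) x := by
  by_cases hx : x ∈ s <;> simp [hx, hp x]

variable {α : Type*} [MeasurableSpace α] {μ : Measure α} {a : ℝ}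

lemma rpow_laverage_le_laverage_rpow [IsFiniteMeasure μ] (ha : 1 ≤ a) {f : α → ℝ≥0∞}
    (hf : AEMeasurable f μ) : (⨍⁻ x, f x ∂μ) ^ a ≤ ⨍⁻ x, f x ^ a ∂μ := by
  have ha0 : 0 < a := by linarith
  rcases eq_or_ne μ 0 with rfl | hμ
  · simp [ENNReal.zero_rpow_of_pos ha0]
  have : NeZero μ := ⟨hμ⟩
  have h := eLpNorm'_le_eLpNorm'_of_exponent_le zero_lt_one ha ((μ univ)⁻¹ • μ)
    (hf.smul_measure (μ univ)⁻¹).aestronglyMeasurable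
  simpa only [eLpNorm', enorm_eq_self, ENNReal.rpow_one, one_div, inv_one, laverage_eq',
    ENNReal.le_rpow_inv_iff ha0] using h

lemma laverage_le_laverage_rpow_rpow [IsFiniteMeasure μ] {p : α → ℝ} {f : α → ℝ≥0∞}
    (hf : AEMeasurable f μ) (hf₁ : ∀ x, f x = 0 ∨ 1 ≤ f x) {θ : ℝ} (hθ : 0 < θ) (hθ₁ : θ ≤ 1)
    (hp₀ : ∀ x, 0 < p x) (hp : ∀ᵐ x ∂μ, (p x)⁻¹ ≤ θ) :
    ⨍⁻ x, f x ∂μ ≤ (⨍⁻ x, f x ^ p x ∂μ) ^ θ := by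
  rw [← inv_inv θ, ENNReal.le_rpow_inv_iff (inv_pos.2 hθ)]
  refine (rpow_laverage_le_laverage_rpow ((one_le_inv₀ hθ).2 hθ₁) hf).trans ?_
  refine lintegral_mono_ae (Measure.ae_smul_measure (hp.mono fun x hx => ?_) _)
  rcases hf₁ x with h | h
  · rw [h, ENNReal.zero_rpow_of_pos (inv_pos.2 hθ)]
    exact zero_le
  · exact ENNReal.rpow_le_rpow_of_exponent_le h (inv_le_of_inv_le₀ (hp₀ x) hx)

lemma laverage_eq_indicator_add_indicator_compl {f : α → ℝ≥0∞} (hf : Measurable f) {s : Set α}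
    (hs : MeasurableSet s) :
    ⨍⁻ x, f x ∂μ = ⨍⁻ x, s.indicator f x ∂μ + ⨍⁻ x, sᶜ.indicator f x ∂μ := by
  simp only [laverage]
  rw [← lintegral_add_left (hf.indicator hs)]
  simp only [indicator_self_add_compl_apply]

lemma setLAverage_le_measure_rpow_neg_inv {s : Set α} (hs : μ s ≠ ⊤) (ha : 1 ≤ a)
    {f : α → ℝ≥0∞} (hf : AEMeasurable f μ) (hfa : ∫⁻ x, f x ^ a ∂μ ≤ 1) :
    ⨍⁻ x in s, f x ∂μ ≤ μ s ^ (-a⁻¹) := by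
  have ha0 : 0 < a := by linarith
  have : IsFiniteMeasure (μ.restrict s) := isFiniteMeasure_restrict.2 hs
  rw [neg_eq_neg_one_mul, ENNReal.rpow_mul, ENNReal.rpow_neg_one, ENNReal.le_rpow_inv_iff ha0]
  calc (⨍⁻ x in s, f x ∂μ) ^ a
      ≤ ⨍⁻ x in s, f x ^ a ∂μ := rpow_laverage_le_laverage_rpow ha hf.restrict
    _ ≤ 1 / μ s := by
        rw [setLAverage_eq]
        gcongr
        exact (setLIntegral_le_lintegral _ _).trans hfa
    _ = (μ s)⁻¹ := one_div _

lemma mul_measure_le_of_lt_setLAverage {g : α → ℝ≥0∞} {l : ℝ≥0∞} {s : Set α}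
    (h : l < ⨍⁻ y in s, g y ∂μ) : l * μ s ≤ ∫⁻ y in s, g y ∂μ :=
  ENNReal.mul_le_of_le_div (h.le.trans_eq (setLAverage_eq _ g s))

lemma lintegral_Ioi_zero_ofReal_rpow (s : ℝ) :
    ∫⁻ t in Ioi (0 : ℝ), ENNReal.ofReal (t ^ s) = ⊤ := by
  by_contra h
  refine not_integrableOn_Ioi_rpow s ((lintegral_ofReal_ne_top_iff_integrable ?_ ?_).1 h)
  · exact (by fun_prop : Measurable fun t : ℝ => t ^ s).aestronglyMeasurable
  · filter_upwards [ae_restrict_mem measurableSet_Ioi] with t (ht : 0 < t)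
    exact Real.rpow_nonneg ht.le s

lemma lintegral_Ioi_ofReal_rpow {s c : ℝ} (hs : s < -1) (hc : 0 < c) :
    ∫⁻ t in Ioi c, ENNReal.ofReal (t ^ s) = ENNReal.ofReal (-c ^ (s + 1) / (s + 1)) := by
  rw [← integral_Ioi_rpow_of_lt hs hc, ofReal_integral_eq_lintegral_ofReal
    (integrableOn_Ioi_rpow_of_lt hs hc)]
  filter_upwards [ae_restrict_mem measurableSet_Ioi] with t ht
  exact Real.rpow_nonneg (hc.trans ht).le s

lemma lintegral_Ioc_ofReal_rpow {s c : ℝ} (hs : -1 < s) (hc : 0 ≤ c) :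
    ∫⁻ t in Ioc 0 c, ENNReal.ofReal (t ^ s) = ENNReal.ofReal (c ^ (s + 1) / (s + 1)) := by
  rw [← ofReal_integral_eq_lintegral_ofReal]
  · rw [← intervalIntegral.integral_of_le hc, integral_rpow (Or.inl hs),
      Real.zero_rpow (by linarith), sub_zero]
  · exact (intervalIntegrable_iff_integrableOn_Ioc_of_le hc).1
      (intervalIntegral.intervalIntegrable_rpow' hs)
  · filter_upwards [ae_restrict_mem measurableSet_Ioc] with t ht
    exact Real.rpow_nonneg ht.1.le s

lemma lintegral_rpow_sub_one_withDensity_self {f : α → ℝ≥0∞} (hf : Measurable f) (ha : 1 ≤ a) :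
    ∫⁻ x, f x ^ (a - 1) ∂μ.withDensity f = ∫⁻ x, f x ^ a ∂μ := by
  rw [lintegral_withDensity_eq_lintegral_mul _ hf (hf.pow_const _)]
  refine lintegral_congr fun x => ?_
  simpa only [Pi.mul_apply, ENNReal.rpow_one, add_sub_cancel] using
    (ENNReal.rpow_add_of_nonneg (x := f x) 1 (a - 1) zero_le_one (sub_nonneg.2 ha)).symm

lemma lintegral_rpow_eq_lintegral_measure_lt_mul {f : α → ℝ≥0∞} (hf : Measurable f) (ha : 0 < a) :
    ∫⁻ x, f x ^ a ∂μ = ENNReal.ofReal a *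
      ∫⁻ t in Ioi (0 : ℝ), μ {x | ENNReal.ofReal t < f x} * ENNReal.ofReal (t ^ (a - 1)) := by
  rcases eq_or_ne (μ {x | f x = ⊤}) 0 with hfin | hinf
  · have hf_real : f =ᵐ[μ] fun x => ENNReal.ofReal (f x).toReal := by
      filter_upwards [measure_eq_zero_iff_ae_notMem.1 hfin] with x hx
      exact (ENNReal.ofReal_toReal hx).symm
    have h := lintegral_rpow_eq_lintegral_meas_lt_mul μ
      (Filter.Eventually.of_forall fun x => (f x).toReal_nonneg) hf.ennreal_toReal.aemeasurable ha
    convert h using 1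
    · refine lintegral_congr_ae ?_
      filter_upwards [hf_real] with x hx
      rw [← ENNReal.ofReal_rpow_of_nonneg (f x).toReal_nonneg ha.le, ← hx]
    · congr 1
      refine setLIntegral_congr_fun measurableSet_Ioi fun t (ht : 0 < t) => ?_
      congr 1
      refine measure_congr ?_
      filter_upwards [hf_real] with x hx
      refine propext ?_
      change ENNReal.ofReal t < f x ↔ t < (f x).toReal
      rw [hx, ENNReal.ofReal_lt_ofReal_iff_of_nonneg ht.le,
        ENNReal.toReal_ofReal (f x).toReal_nonneg]
  · have hl : ∫⁻ x, f x ^ a ∂μ = ⊤ := by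
      by_contra h
      refine hinf (le_antisymm (le_trans (measure_mono fun x hx => ?_)
        (measure_eq_top_of_lintegral_ne_top (hf.pow_const a).aemeasurable h).le) zero_le)
      rw [mem_ofPred_eq] at hx ⊢
      rw [hx, ENNReal.top_rpow_of_pos ha]
    rw [hl, eq_comm]
    refine ENNReal.mul_eq_top.2 (Or.inl ⟨by simpa using ha, top_le_iff.1 ?_⟩)
    calc (⊤ : ℝ≥0∞)
        = ∫⁻ t in Ioi (0 : ℝ), μ {x | f x = ⊤} * ENNReal.ofReal (t ^ (a - 1)) := by
          rw [lintegral_const_mul _ (by fun_prop), lintegral_Ioi_zero_ofReal_rpow,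
            ENNReal.mul_top hinf]
      _ ≤ _ := by
          gcongr with t x
          rintro (hx : f x = ⊤)
          simp [hx]

end Lebesgue

section MaximalFunction

/-- The uncentred Hardy–Littlewood maximal function of a nonnegative function: the supremum of its
averages over the open balls containing the point. -/
def maximalFunction {E : Type*} [PseudoMetricSpace E] [MeasurableSpace E] (μ : Measure E)
    (g : E → ℝ≥0∞) (x : E) : ℝ≥0∞ :=
  ⨆ (z : E) (r : ℝ) (_ : x ∈ ball z r), ⨍⁻ y in ball z r, g y ∂μ

section PseudoMetricSpace

variable {E : Type*} [PseudoMetricSpace E] [MeasurableSpace E] {μ : Measure E}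

lemma setLAverage_ball_le_maximalFunction {z x : E} {r : ℝ} (h : x ∈ ball z r) (g : E → ℝ≥0∞) :
    ⨍⁻ y in ball z r, g y ∂μ ≤ maximalFunction μ g x :=
  le_iSup_of_le z (le_iSup₂_of_le r h le_rfl)

lemma lt_maximalFunction_iff {g : E → ℝ≥0∞} {l : ℝ≥0∞} {x : E} :
    l < maximalFunction μ g x ↔ ∃ z r, x ∈ ball z r ∧ l < ⨍⁻ y in ball z r, g y ∂μ := by
  simp only [maximalFunction, lt_iSup_iff, exists_prop]

lemma lowerSemicontinuous_maximalFunction (g : E → ℝ≥0∞) :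
    LowerSemicontinuous (maximalFunction μ g) := by
  intro x l hl
  obtain ⟨z, r, hx, hz⟩ := lt_maximalFunction_iff.1 hl
  filter_upwards [isOpen_ball.mem_nhds hx] with y hy
  exact lt_maximalFunction_iff.2 ⟨z, r, hy, hz⟩

lemma measurable_maximalFunction [OpensMeasurableSpace E] (g : E → ℝ≥0∞) :
    Measurable (maximalFunction μ g) :=
  (lowerSemicontinuous_maximalFunction g).measurable

lemma maximalFunction_le_add_const {g h : E → ℝ≥0∞} {c : ℝ≥0∞} (hgh : ∀ x, g x ≤ h x + c)
    (x : E) : maximalFunction μ g x ≤ maximalFunction μ h x + c := by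
  refine iSup_le fun z => iSup₂_le fun r hx => ?_
  calc ⨍⁻ y in ball z r, g y ∂μ
      ≤ ⨍⁻ y in ball z r, (h y + c) ∂μ := lintegral_mono hgh
    _ = ⨍⁻ y in ball z r, h y ∂μ + ⨍⁻ _ in ball z r, c ∂μ :=
        lintegral_add_right _ measurable_const
    _ ≤ maximalFunction μ h x + c := by
        gcongr
        · exact setLAverage_ball_le_maximalFunction hx h
        · rw [setLAverage_eq, setLIntegral_const]
          exact ENNReal.div_le_of_le_mul le_rfl

end PseudoMetricSpace

variable {E : Type*} [NormedAddCommGroup E] [NormedSpace ℝ E] [FiniteDimensional ℝ E]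
  [MeasurableSpace E] [BorelSpace E] {μ : Measure E} [μ.IsAddHaarMeasure]

lemma exists_forall_measure_ball_le_imp_le [Nontrivial E] (μ : Measure E) [μ.IsAddHaarMeasure]
    {m : ℝ≥0∞} (hm : m ≠ ⊤) : ∃ R : ℝ, ∀ z r, μ (ball z r) ≤ m → r ≤ R := by
  have : NoncompactSpace E := NormedSpace.noncompactSpace ℝ E
  have huniv : Filter.Tendsto (fun k : ℕ => μ (ball 0 k)) Filter.atTop (𝓝 ⊤) := by
    rw [← measure_univ_of_isAddLeftInvariant μ, ← iUnion_ball_nat (0 : E)]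
    exact tendsto_measure_iUnion_atTop fun i j h => ball_subset_ball (Nat.cast_le.2 h)
  obtain ⟨k, hk⟩ := (huniv.eventually (lt_mem_nhds hm.lt_top)).exists
  refine ⟨k, fun z r hr => ?_⟩
  by_contra! hlt
  refine (hr.trans_lt hk).not_ge ?_
  rw [← Measure.addHaar_ball_center μ z k]
  exact measure_mono (ball_subset_ball hlt.le)

lemma exists_countable_pairwiseDisjoint_ball_cover [Nontrivial E] {g : E → ℝ≥0∞} {l : ℝ≥0∞}
    (hl : l ≠ 0) (hg : ∫⁻ y, g y ∂μ ≠ ⊤) :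
    ∃ u : Set (E × ℝ), u.Countable ∧ u.PairwiseDisjoint (fun a => ball a.1 a.2) ∧
      (∀ a ∈ u, l * μ (ball a.1 a.2) ≤ ∫⁻ y in ball a.1 a.2, g y ∂μ) ∧
      {x | l < maximalFunction μ g x} ⊆ ⋃ a ∈ u, ball a.1 (5 * a.2) := by
  let t : Set (E × ℝ) := {a | l < ⨍⁻ y in ball a.1 a.2, g y ∂μ}
  have ht {a : E × ℝ} (ha : a ∈ t) : l * μ (ball a.1 a.2) ≤ ∫⁻ y in ball a.1 a.2, g y ∂μ :=
    mul_measure_le_of_lt_setLAverage ha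
  have ht_ne {a : E × ℝ} (ha : a ∈ t) : (ball a.1 a.2).Nonempty := by
    by_contra h
    simp [t, not_nonempty_iff_eq_empty.1 h] at ha
  obtain ⟨R, hR⟩ := exists_forall_measure_ball_le_imp_le μ (ENNReal.div_ne_top hg hl)
  obtain ⟨u, hut, hdisj, hcover⟩ := Vitali.exists_disjoint_subfamily_covering_enlargement_ball t
    Prod.fst Prod.snd R (fun a ha => hR a.1 a.2 <| by
      rw [ENNReal.le_div_iff_mul_le (.inl hl) (.inr hg), mul_comm]
      exact (ht ha).trans (setLIntegral_le_lintegral _ _)) 5 (by norm_num)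
  refine ⟨u, hdisj.countable_of_isOpen (fun _ _ => isOpen_ball) fun a ha => ht_ne (hut ha),
    hdisj, fun a ha => ht (hut ha), fun x hx => ?_⟩
  obtain ⟨z, r, hxz, hz⟩ := lt_maximalFunction_iff.1 hx
  obtain ⟨b, hb, hsub⟩ := hcover (z, r) hz
  exact mem_biUnion hb (hsub hxz)

theorem mul_measure_lt_maximalFunction_le [Nontrivial E] (g : E → ℝ≥0∞) (l : ℝ≥0∞) :
    l * μ {x | l < maximalFunction μ g x} ≤ 5 ^ finrank ℝ E * ∫⁻ y, g y ∂μ := by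
  rcases eq_or_ne l 0 with rfl | hl
  · simp
  rcases eq_or_ne (∫⁻ y, g y ∂μ) ⊤ with hg | hg
  · simp [hg, ENNReal.mul_top]
  obtain ⟨u, hu, hdisj, hmass, hcover⟩ := exists_countable_pairwiseDisjoint_ball_cover hl hg
  calc l * μ {x | l < maximalFunction μ g x}
      ≤ l * μ (⋃ a ∈ u, ball a.1 (5 * a.2)) := by
        gcongr
    _ ≤ l * ∑' a : u, μ (ball a.1.1 (5 * a.1.2)) := by
        gcongr
        exact measure_biUnion_le μ hu _
    _ = 5 ^ finrank ℝ E * ∑' a : u, l * μ (ball a.1.1 a.1.2) := by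
        simp_rw [Measure.addHaar_ball_mul_of_pos μ _ (by norm_num : (0 : ℝ) < 5),
          Measure.addHaar_ball_center μ (_ : E), ENNReal.tsum_mul_left]
        rw [ENNReal.ofReal_pow (by norm_num), ENNReal.ofReal_ofNat, mul_left_comm]
    _ ≤ 5 ^ finrank ℝ E * ∑' a : u, ∫⁻ y in ball a.1.1 a.1.2, g y ∂μ := by
        gcongr with a
        exact hmass a a.2
    _ = 5 ^ finrank ℝ E * ∫⁻ y in ⋃ a ∈ u, ball a.1 a.2, g y ∂μ := by
        rw [lintegral_biUnion hu (fun _ _ => measurableSet_ball) hdisj]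
    _ ≤ 5 ^ finrank ℝ E * ∫⁻ y, g y ∂μ := by
        gcongr
        exact Measure.restrict_le_self

-- Only the part of `g` above level `t` contributes to the superlevel set of `M g` at level `2 t`.
lemma mul_measure_lt_maximalFunction_div_two_le [Nontrivial E] {g : E → ℝ≥0∞} (hg : Measurable g)
    {t : ℝ≥0∞} (ht : t ≠ ⊤) :
    t * μ {x | t < maximalFunction μ g x / 2} ≤
      5 ^ finrank ℝ E * μ.withDensity g {x | t < g x} := by
  have hmeas : MeasurableSet {x | t < g x} := measurableSet_lt measurable_const hg
  have hsplit (x : E) : g x ≤ indicator {x | t < g x} g x + t := by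
    by_cases hx : t < g x
    · simp [hx]
    · exact (not_lt.1 hx).trans le_add_self
  rw [withDensity_apply _ hmeas, ← lintegral_indicator hmeas]
  refine le_trans ?_ (mul_measure_lt_maximalFunction_le _ t)
  refine mul_le_mul_right (measure_mono fun x hx => ?_) t
  have hx2 : t + t < maximalFunction μ g x := by
    rw [← mul_two]
    exact ENNReal.mul_lt_of_lt_div hx
  exact (ENNReal.add_lt_add_iff_right ht).1 (hx2.trans_le (maximalFunction_le_add_const hsplit x))

theorem lintegral_maximalFunction_rpow_le [Nontrivial E] {a : ℝ} (ha : 1 < a) {g : E → ℝ≥0∞}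
    (hg : Measurable g) :
    ∫⁻ x, maximalFunction μ g x ^ a ∂μ ≤
      2 ^ a * ENNReal.ofReal (a / (a - 1)) * 5 ^ finrank ℝ E * ∫⁻ x, g x ^ a ∂μ := by
  have ha₀ : 0 < a := by linarith
  have ha₁ : 0 < a - 1 := by linarith
  have hlevel {t : ℝ} (ht : 0 < t) :
      μ {x | ENNReal.ofReal t < maximalFunction μ g x / 2} * ENNReal.ofReal (t ^ (a - 1)) ≤
        5 ^ finrank ℝ E * (μ.withDensity g {x | ENNReal.ofReal t < g x} *
          ENNReal.ofReal (t ^ (a - 1 - 1))) := by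
    have hpow : ENNReal.ofReal (t ^ (a - 1)) =
        ENNReal.ofReal t * ENNReal.ofReal (t ^ (a - 1 - 1)) := by
      rw [← ENNReal.ofReal_mul ht.le, ← Real.rpow_one_add' ht.le (by linarith), add_sub_cancel]
    rw [hpow, ← mul_assoc, ← mul_assoc, mul_comm (μ _)]
    gcongr ?_ * _
    exact mul_measure_lt_maximalFunction_div_two_le hg ENNReal.ofReal_ne_top
  calc ∫⁻ x, maximalFunction μ g x ^ a ∂μ
      = 2 ^ a * ∫⁻ x, (maximalFunction μ g x / 2) ^ a ∂μ := by
        rw [← lintegral_const_mul' _ _ (by finiteness)]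
        refine lintegral_congr fun x => ?_
        rw [← ENNReal.mul_rpow_of_nonneg _ _ ha₀.le, ENNReal.mul_div_cancel (by simp) (by simp)]
    _ = 2 ^ a * (ENNReal.ofReal a * ∫⁻ t in Ioi (0 : ℝ),
          μ {x | ENNReal.ofReal t < maximalFunction μ g x / 2} * ENNReal.ofReal (t ^ (a - 1))) := by
        rw [lintegral_rpow_eq_lintegral_measure_lt_mul
          ((measurable_maximalFunction g).div_const 2) ha₀]
    _ ≤ 2 ^ a * (ENNReal.ofReal a * ∫⁻ t in Ioi (0 : ℝ), 5 ^ finrank ℝ E *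
          (μ.withDensity g {x | ENNReal.ofReal t < g x} *
            ENNReal.ofReal (t ^ (a - 1 - 1)))) := by
        gcongr 2 ^ a * (ENNReal.ofReal a * ?_)
        exact setLIntegral_mono' measurableSet_Ioi fun t ht => hlevel ht
    _ = 2 ^ a * ENNReal.ofReal (a / (a - 1)) * 5 ^ finrank ℝ E * ∫⁻ x, g x ^ a ∂μ := by
        have hconst : ENNReal.ofReal a = ENNReal.ofReal (a / (a - 1)) * ENNReal.ofReal (a - 1) := by
          rw [← ENNReal.ofReal_mul (by positivity), div_mul_cancel₀ _ ha₁.ne']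
        rw [lintegral_const_mul' _ _ (by finiteness),
          ← lintegral_rpow_sub_one_withDensity_self hg ha.le,
          lintegral_rpow_eq_lintegral_measure_lt_mul hg ha₁, hconst]
        ring

end MaximalFunction

section RieszPotential

lemma lintegral_mul_lintegral_Ioi_eq {α : Type*} [MeasurableSpace α] {μ : Measure α} [SFinite μ]
    {ν : Measure ℝ} [SFinite ν] {ρ : α → ℝ} (hρ : Measurable ρ) {g : α → ℝ≥0∞} (hg : Measurable g)
    {w : ℝ → ℝ≥0∞} (hw : Measurable w) :
    ∫⁻ y, g y * ∫⁻ t in Ioi (ρ y), w t ∂ν ∂μ =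
      ∫⁻ t, (∫⁻ y in {y | ρ y < t}, g y ∂μ) * w t ∂ν := by
  have hset : MeasurableSet {z : α × ℝ | ρ z.1 < z.2} :=
    measurableSet_lt (hρ.comp measurable_fst) measurable_snd
  have hmeas : Measurable fun z : α × ℝ => indicator {z | ρ z.1 < z.2} (fun z => g z.1 * w z.2) z :=
    ((hg.comp measurable_fst).mul (hw.comp measurable_snd)).indicator hset
  calc ∫⁻ y, g y * ∫⁻ t in Ioi (ρ y), w t ∂ν ∂μ
      = ∫⁻ y, ∫⁻ t, indicator {z : α × ℝ | ρ z.1 < z.2} (fun z => g z.1 * w z.2) (y, t) ∂ν ∂μ := by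
        refine lintegral_congr fun y => ?_
        rw [← lintegral_const_mul _ hw, ← lintegral_indicator measurableSet_Ioi]
        rfl
    _ = ∫⁻ t, ∫⁻ y, indicator {z : α × ℝ | ρ z.1 < z.2} (fun z => g z.1 * w z.2) (y, t) ∂μ ∂ν :=
        lintegral_lintegral_swap hmeas.aemeasurable
    _ = ∫⁻ t, (∫⁻ y in {y | ρ y < t}, g y ∂μ) * w t ∂ν := by
        refine lintegral_congr fun t => ?_
        rw [← lintegral_mul_const _ hg,
          ← lintegral_indicator (measurableSet_lt hρ measurable_const)]
        rfl

lemma ofReal_rpow_le_lintegral_Ioi {s c : ℝ} (hs : s < 0) (hc : 0 ≤ c) :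
    ENNReal.ofReal (c ^ s) ≤
      ENNReal.ofReal (-s) * ∫⁻ t in Ioi c, ENNReal.ofReal (t ^ (s - 1)) := by
  rcases hc.eq_or_lt with rfl | hc
  · simp [Real.zero_rpow hs.ne]
  · rw [lintegral_Ioi_ofReal_rpow (by linarith) hc, ← ENNReal.ofReal_mul (by linarith),
      sub_add_cancel, neg_mul_comm, neg_div, neg_neg, mul_div_cancel₀ _ hs.ne]

lemma lintegral_min_rpow_le_add {β γ δ : ℝ} (hβ : 0 < β) (hγ : 0 < γ) (hδ : 0 < δ) (m : ℝ≥0∞) :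
    ∫⁻ t in Ioi (0 : ℝ), min (ENNReal.ofReal (t ^ (β - 1)) * m) (ENNReal.ofReal (t ^ (-γ - 1))) ≤
      ENNReal.ofReal (δ ^ β / β) * m + ENNReal.ofReal (δ ^ (-γ) / γ) := by
  rw [← Ioc_union_Ioi_eq_Ioi hδ.le]
  calc _ ≤ (∫⁻ t in Ioc 0 δ, ENNReal.ofReal (t ^ (β - 1)) * m) +
          ∫⁻ t in Ioi δ, ENNReal.ofReal (t ^ (-γ - 1)) := by
        refine (lintegral_union_le _ _ _).trans ?_
        gcongr
        · exact min_le_left _ _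
        · exact min_le_right _ _
    _ = ENNReal.ofReal (δ ^ β / β) * m + ENNReal.ofReal (δ ^ (-γ) / γ) := by
        rw [lintegral_mul_const _ (by fun_prop), lintegral_Ioc_ofReal_rpow (by linarith) hδ.le,
          lintegral_Ioi_ofReal_rpow (by linarith) hδ, sub_add_cancel, sub_add_cancel,
          neg_div_neg_eq]

lemma lintegral_min_rpow_le {β γ : ℝ} (hβ : 0 < β) (hγ : 0 < γ) (m : ℝ≥0∞) :
    ∫⁻ t in Ioi (0 : ℝ), min (ENNReal.ofReal (t ^ (β - 1)) * m) (ENNReal.ofReal (t ^ (-γ - 1))) ≤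
      ENNReal.ofReal (1 / β + 1 / γ) * m ^ (γ / (β + γ)) := by
  have hθ : 0 < γ / (β + γ) := by positivity
  rcases eq_or_ne m 0 with rfl | hm₀
  · simp
  rcases eq_or_ne m ⊤ with rfl | hm
  · have : ENNReal.ofReal (1 / β + 1 / γ) ≠ 0 := by
      simpa using (by positivity : 0 < β⁻¹ + γ⁻¹)
    rw [ENNReal.top_rpow_of_pos hθ, ENNReal.mul_top this]
    exact le_top
  lift m to ℝ≥0 using hm
  have hm : 0 < (m : ℝ) := by simpa [pos_iff_ne_zero] using hm₀
  -- At `δ` the two terms of the minimum agree.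
  set δ : ℝ := (m : ℝ) ^ (-(β + γ)⁻¹)
  have hδ : 0 < δ := Real.rpow_pos_of_pos hm _
  have hsum : 1 + -(β + γ)⁻¹ * β = γ / (β + γ) := by
    field_simp
    ring
  have hδβ : m * δ ^ β = (m : ℝ) ^ (γ / (β + γ)) := by
    rw [← Real.rpow_mul hm.le, ← Real.rpow_one_add' hm.le (hsum ▸ hθ.ne'), hsum]
  have hδγ : δ ^ (-γ) = (m : ℝ) ^ (γ / (β + γ)) := by
    rw [← Real.rpow_mul hm.le]
    congr 1
    field_simp
  refine (lintegral_min_rpow_le_add hβ hγ hδ m).trans_eq ?_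
  rw [hδγ, ← ENNReal.ofReal_coe_nnreal, ← ENNReal.ofReal_mul (by positivity),
    ENNReal.ofReal_rpow_of_pos hm, div_mul_eq_mul_div, mul_comm (δ ^ β), hδβ,
    ← ENNReal.ofReal_add (by positivity) (by positivity), ← ENNReal.ofReal_mul (by positivity)]
  congr 1
  ring

variable {E : Type*} [NormedAddCommGroup E] [NormedSpace ℝ E] [MeasurableSpace E]

/-- The Riesz potential of order `β` of a nonnegative function, with values in `[0, ∞]`. -/
def rieszPotential (μ : Measure E) (β : ℝ) (g : E → ℝ≥0∞) (x : E) : ℝ≥0∞ :=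
  ∫⁻ y, g y * ENNReal.ofReal (‖x - y‖ ^ (β - finrank ℝ E)) ∂μ

variable {μ : Measure E} {β : ℝ}

lemma rieszPotential_div_const (g : E → ℝ≥0∞) {l : ℝ≥0∞} (hl : l ≠ 0) (x : E) :
    rieszPotential μ β (fun y => g y / l) x = rieszPotential μ β g x / l := by
  simp only [rieszPotential, div_eq_mul_inv, mul_right_comm _ l⁻¹]
  exact lintegral_mul_const' _ _ (ENNReal.inv_ne_top.2 hl)

variable [BorelSpace E]

lemma rieszPotential_le_lintegral_setLIntegral_ball [SFinite μ] (hβ : β < finrank ℝ E)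
    {g : E → ℝ≥0∞} (hg : Measurable g) (x : E) :
    rieszPotential μ β g x ≤ ENNReal.ofReal (finrank ℝ E - β) *
      ∫⁻ t in Ioi (0 : ℝ), (∫⁻ y in ball x t, g y ∂μ) *
        ENNReal.ofReal (t ^ (β - finrank ℝ E - 1)) := by
  have hball (t : ℝ) : ball x t = {y | ‖x - y‖ < t} := by
    ext y
    rw [mem_ball_iff_norm', mem_ofPred_eq]
  have hρ : Measurable fun y => ‖x - y‖ := by fun_prop
  simp only [hball]
  rw [← lintegral_mul_lintegral_Ioi_eq hρ hg (by fun_prop),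
    ← lintegral_const_mul' _ _ ENNReal.ofReal_ne_top]
  refine lintegral_mono fun y => ?_
  rw [Measure.restrict_restrict measurableSet_Ioi,
    inter_eq_left.2 (Ioi_subset_Ioi (norm_nonneg (x - y))), mul_left_comm]
  gcongr
  simpa only [neg_sub] using
    ofReal_rpow_le_lintegral_Ioi (sub_neg.2 hβ) (norm_nonneg (x - y))

variable [FiniteDimensional ℝ E] [μ.IsAddHaarMeasure]

-- The first bound is good for small radii, the second one for large radii.
lemma exists_setLIntegral_ball_mul_rpow_le (μ : Measure E) [μ.IsAddHaarMeasure] {q : ℝ}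
    (hq : 1 ≤ q) : ∃ K : ℝ≥0, ∀ β : ℝ, ∀ g : E → ℝ≥0∞, Measurable g → ∫⁻ y, g y ^ q ∂μ ≤ 1 →
      ∀ x, ∀ t > 0, (∫⁻ y in ball x t, g y ∂μ) * ENNReal.ofReal (t ^ (β - finrank ℝ E - 1)) ≤
        K * min (ENNReal.ofReal (t ^ (β - 1)) * maximalFunction μ g x)
          (ENNReal.ofReal (t ^ (-(finrank ℝ E / q - β) - 1))) := by
  set v : ℝ≥0∞ := μ (ball 0 1)
  have hv₀ : v ≠ 0 := (measure_ball_pos μ 0 one_pos).ne'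
  have hv : v ≠ ⊤ := measure_ball_lt_top.ne
  have hvq : v ^ (-q⁻¹) ≠ ⊤ := by finiteness
  refine ⟨(v * max 1 (v ^ (-q⁻¹))).toNNReal, fun β g hg hgq x t ht => ?_⟩
  have hball : μ (ball x t) = ENNReal.ofReal (t ^ (finrank ℝ E : ℝ)) * v := by
    rw [Measure.addHaar_ball_of_pos μ x ht, Real.rpow_natCast]
  have hmean : ⨍⁻ y in ball x t, g y ∂μ ≤
      ENNReal.ofReal (t ^ (-(finrank ℝ E / q))) * v ^ (-q⁻¹) := by
    refine (setLAverage_le_measure_rpow_neg_inv measure_ball_lt_top.ne hq hg.aemeasurable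
      hgq).trans_eq ?_
    rw [hball, ENNReal.mul_rpow_of_ne_top ENNReal.ofReal_ne_top hv,
      ENNReal.ofReal_rpow_of_pos (by positivity), ← Real.rpow_mul ht.le, mul_neg, div_eq_mul_inv]
  rw [← measure_mul_setLAverage _ measure_ball_lt_top.ne, hball,
    ENNReal.coe_toNNReal (by finiteness)]
  calc ENNReal.ofReal (t ^ (finrank ℝ E : ℝ)) * v * (⨍⁻ y in ball x t, g y ∂μ) *
        ENNReal.ofReal (t ^ (β - finrank ℝ E - 1))
      = v * (ENNReal.ofReal (t ^ (β - 1)) * ⨍⁻ y in ball x t, g y ∂μ) := by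
        rw [show β - 1 = finrank ℝ E + (β - finrank ℝ E - 1) by ring, Real.rpow_add ht,
          ENNReal.ofReal_mul (by positivity)]
        ring
    _ ≤ v * (max 1 (v ^ (-q⁻¹)) * min (ENNReal.ofReal (t ^ (β - 1)) * maximalFunction μ g x)
          (ENNReal.ofReal (t ^ (-(finrank ℝ E / q - β) - 1)))) := by
        gcongr v * ?_
        rw [mul_min]
        refine le_min ?_ ?_
        · refine le_trans ?_ (le_mul_of_one_le_left' (le_max_left _ _))
          gcongr
          exact setLAverage_ball_le_maximalFunction (mem_ball_self ht) g
        · rw [show -(finrank ℝ E / q - β) - 1 = β - 1 + -(finrank ℝ E / q) by ring,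
            Real.rpow_add ht, ENNReal.ofReal_mul (by positivity), mul_left_comm, mul_comm (max _ _)]
          gcongr
          exact hmean.trans (mul_le_mul_right (le_max_right _ _) _)
    _ = _ := (mul_assoc _ _ _).symm

theorem exists_rieszPotential_le_maximalFunction_rpow {q : ℝ} (hq : 1 ≤ q) (hβ : 0 < β)
    (hβq : β < finrank ℝ E / q) :
    ∃ K : ℝ≥0, ∀ g : E → ℝ≥0∞, Measurable g → ∫⁻ y, g y ^ q ∂μ ≤ 1 → ∀ x,
      rieszPotential μ β g x ≤ K * maximalFunction μ g x ^ (1 - β * q / finrank ℝ E) := by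
  have hd : (finrank ℝ E : ℝ) / q ≤ finrank ℝ E := div_le_self (Nat.cast_nonneg _) hq
  have hγ : 0 < finrank ℝ E / q - β := sub_pos.2 hβq
  have hexp : (finrank ℝ E / q - β) / (β + (finrank ℝ E / q - β)) = 1 - β * q / finrank ℝ E := by
    have : (0 : ℝ) < finrank ℝ E := by linarith
    rw [add_sub_cancel]
    field_simp
  obtain ⟨K, hK⟩ := exists_setLIntegral_ball_mul_rpow_le μ hq
  refine ⟨Real.toNNReal (finrank ℝ E - β) *
    (K * Real.toNNReal (1 / β + 1 / (finrank ℝ E / q - β))), fun g hg hgq x => ?_⟩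
  calc rieszPotential μ β g x
      ≤ ENNReal.ofReal (finrank ℝ E - β) * ∫⁻ t in Ioi (0 : ℝ),
          K * min (ENNReal.ofReal (t ^ (β - 1)) * maximalFunction μ g x)
            (ENNReal.ofReal (t ^ (-(finrank ℝ E / q - β) - 1))) := by
        refine (rieszPotential_le_lintegral_setLIntegral_ball (hβq.trans_le hd) hg x).trans ?_
        gcongr _ * ?_
        exact setLIntegral_mono' measurableSet_Ioi fun t ht => hK β g hg hgq x t ht
    _ ≤ ENNReal.ofReal (finrank ℝ E - β) * (K * (ENNReal.ofReal (1 / β +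
          1 / (finrank ℝ E / q - β)) * maximalFunction μ g x ^ (1 - β * q / finrank ℝ E))) := by
        rw [lintegral_const_mul' _ _ ENNReal.coe_ne_top, ← hexp]
        gcongr
        exact lintegral_min_rpow_le hβ hγ _
    _ = _ := by
        simp only [ENNReal.coe_mul, mul_assoc, ENNReal.ofReal]

end RieszPotential

section BallVolume

variable {E : Type*} [NormedAddCommGroup E] [NormedSpace ℝ E] [FiniteDimensional ℝ E]
  [MeasurableSpace E] [BorelSpace E]

lemma max_one_inv_measure_ball_le (μ : Measure E) [μ.IsAddHaarMeasure] (z : E) {r R : ℝ}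
    (hr : 0 < r) (hR : 1 ≤ R) (hrR : r⁻¹ ≤ 2 * R) :
    max 1 (μ (ball z r))⁻¹ ≤
      max 1 (2 ^ finrank ℝ E * (μ (ball 0 1))⁻¹) * ENNReal.ofReal (R ^ finrank ℝ E) := by
  have hv : μ (ball 0 1) ≠ 0 := (measure_ball_pos μ 0 one_pos).ne'
  refine max_le (one_le_mul_of_one_le_of_one_le (le_max_left _ _)
    (ENNReal.one_le_ofReal.2 (one_le_pow₀ hR))) ?_
  calc (μ (ball z r))⁻¹ = ENNReal.ofReal (r⁻¹ ^ finrank ℝ E) * (μ (ball 0 1))⁻¹ := by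
        rw [Measure.addHaar_ball_of_pos μ z hr, ENNReal.mul_inv (.inr (by finiteness))
          (.inr hv), inv_pow, ENNReal.ofReal_inv_of_pos (by positivity)]
    _ ≤ ENNReal.ofReal ((2 * R) ^ finrank ℝ E) * (μ (ball 0 1))⁻¹ := by gcongr
    _ = 2 ^ finrank ℝ E * (μ (ball 0 1))⁻¹ * ENNReal.ofReal (R ^ finrank ℝ E) := by
        rw [mul_pow, ENNReal.ofReal_mul (by positivity), ENNReal.ofReal_pow zero_le_two,
          ENNReal.ofReal_ofNat, mul_right_comm]
    _ ≤ _ := by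
        gcongr
        exact le_max_right _ _

lemma exists_max_one_inv_measure_ball_rpow_le (μ : Measure E) [μ.IsAddHaarMeasure] {C : ℝ}
    (hC : 0 ≤ C) : ∃ K : ℝ≥0, 0 < K ∧ ∀ (z : E) (r : ℝ), 0 < r →
      max 1 (μ (ball z r))⁻¹ ^ (C / Real.log (Real.exp 1 + 1 / (2 * r))) ≤ K := by
  set d := finrank ℝ E
  set w : ℝ≥0∞ := max 1 (2 ^ d * (μ (ball 0 1))⁻¹)
  have hw : w ≠ ⊤ := by
    have : μ (ball 0 1) ≠ 0 := (measure_ball_pos μ 0 one_pos).ne'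
    finiteness
  refine ⟨(w ^ C).toNNReal * Real.toNNReal (Real.exp (d * C)), ?_, fun z r hr => ?_⟩
  · have : 0 < w := one_pos.trans_le (le_max_left _ _)
    exact mul_pos (ENNReal.toNNReal_pos (by positivity) (by finiteness))
      (Real.toNNReal_pos.2 (Real.exp_pos _))
  rw [ENNReal.coe_mul, ENNReal.coe_toNNReal (by finiteness)]
  set R := Real.exp 1 + 1 / (2 * r) with hR
  have hR₀ : 0 < R := by positivity
  have hlog : 1 ≤ Real.log R := by
    rw [Real.le_log_iff_exp_le hR₀]
    exact le_add_of_nonneg_right (by positivity)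
  have hR₁ : 1 ≤ R := (Real.log_nonneg_iff hR₀).1 (zero_le_one.trans hlog)
  have hrR : r⁻¹ ≤ 2 * R := by
    rw [hR, mul_add, one_div, mul_inv, mul_inv_cancel_left₀ two_ne_zero]
    exact le_add_of_nonneg_left (by positivity)
  have hball : max 1 (μ (ball z r))⁻¹ ≤ w * ENNReal.ofReal (R ^ d) :=
    max_one_inv_measure_ball_le μ z hr hR₁ hrR
  calc max 1 (μ (ball z r))⁻¹ ^ (C / Real.log R)
      ≤ w ^ (C / Real.log R) * ENNReal.ofReal (R ^ d) ^ (C / Real.log R) := by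
        rw [← ENNReal.mul_rpow_of_nonneg _ _ (by positivity)]
        gcongr
    _ = w ^ (C / Real.log R) * ENNReal.ofReal (Real.exp (d * C)) := by
        rw [ENNReal.ofReal_rpow_of_pos (by positivity), ← Real.rpow_natCast,
          ← Real.rpow_mul hR₀.le, Real.rpow_def_of_pos hR₀]
        congr 3
        field_simp
    _ ≤ w ^ C * ENNReal.ofReal (Real.exp (d * C)) := by
        gcongr
        · exact le_max_left _ _
        · exact div_le_self hC hlog

end BallVolume

section LogHolder

lemma mul_rpow_le_rpow_add_rpow_inv {a b : ℝ≥0∞} (ha : a ≤ 1) (hb : b ≤ 1) {u w τ : ℝ}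
    (hu : 0 < u) (hw : 0 < w) (hτ : 0 < τ) (h : u⁻¹ ≤ w⁻¹ + τ) :
    (a * b) ^ u ≤ a ^ w + b ^ τ⁻¹ := by
  set m := max (a ^ w) (b ^ τ⁻¹)
  have hm : m ≤ 1 := max_le (ENNReal.rpow_le_one ha hw.le)
    (ENNReal.rpow_le_one hb (inv_nonneg.2 hτ.le))
  have ham : a ≤ m ^ w⁻¹ := (ENNReal.le_rpow_inv_iff hw).2 (le_max_left _ _)
  have hbm : b ≤ m ^ τ := by
    rw [← inv_inv τ, ENNReal.le_rpow_inv_iff (inv_pos.2 hτ)]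
    exact le_max_right _ _
  have hexp : 1 ≤ (w⁻¹ + τ) * u := by
    calc 1 = u⁻¹ * u := (inv_mul_cancel₀ hu.ne').symm
      _ ≤ (w⁻¹ + τ) * u := by gcongr
  calc (a * b) ^ u ≤ (m ^ w⁻¹ * m ^ τ) ^ u := by gcongr
    _ = m ^ ((w⁻¹ + τ) * u) := by
        rw [← ENNReal.rpow_add_of_nonneg _ _ (by positivity) hτ.le, ENNReal.rpow_mul]
    _ ≤ m ^ (1 : ℝ) := ENNReal.rpow_le_rpow_of_exponent_ge hm hexp
    _ ≤ a ^ w + b ^ τ⁻¹ := by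
        rw [ENNReal.rpow_one]
        exact max_le le_self_add le_add_self

lemma rpow_le_mul_rpow_of_le_rpow {A D N K : ℝ≥0∞} {u θ ω : ℝ} (hu : 0 < u) (hθ : u⁻¹ ≤ θ)
    (hθω : θ ≤ u⁻¹ + ω) (hA : A ≤ D ^ θ) (hD : D ≤ N) (hK : max 1 N ^ ω ≤ K) :
    A ^ u ≤ D * K ^ u := by
  have hθu : 0 ≤ θ * u - 1 := by
    rw [sub_nonneg, ← inv_mul_cancel₀ hu.ne']
    gcongr
  have hωu : θ * u - 1 ≤ ω * u := by
    rw [sub_le_iff_le_add, ← inv_mul_cancel₀ hu.ne', ← add_mul, add_comm]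
    gcongr
  calc A ^ u ≤ D ^ (1 + (θ * u - 1)) := by
        rw [add_sub_cancel, ENNReal.rpow_mul]
        gcongr
    _ = D * D ^ (θ * u - 1) := by
        rw [ENNReal.rpow_add_of_nonneg _ _ zero_le_one hθu, ENNReal.rpow_one]
    _ ≤ D * max 1 N ^ (ω * u) := by
        gcongr D * ?_
        exact (ENNReal.rpow_le_rpow (hD.trans (le_max_right _ _)) hθu).trans
          (ENNReal.rpow_le_rpow_of_exponent_le (le_max_left _ _) hωu)
    _ ≤ D * K ^ u := by
        rw [ENNReal.rpow_mul]
        gcongr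

/-- The radial weight `(1 + |x|)^(-m)`, by which the decay condition on a log-Hölder exponent
controls the variation of powers of small numbers. -/
def decayWeight {E : Type*} [NormedAddCommGroup E] (m : ℝ) (x : E) : ℝ≥0∞ :=
  ENNReal.ofReal ((1 + ‖x‖) ^ (-m))

namespace IsPLog

variable {E : Type*} [NormedAddCommGroup E] [MeasurableSpace E] {Ω : Set E} {p : E → ℝ}

lemma div_const (hp : IsPLog Ω p) {c : ℝ} (hc : 0 < c) (hcp : ∀ x ∈ Ω, c ≤ p x) :
    IsPLog Ω fun x => p x / c := by
  obtain ⟨hmeas, -, C₁, hC₁, C₂, hC₂, pinf, hloc, hdecay⟩ := hp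
  have habs (u v : ℝ) : |1 / (u / c) - 1 / (v / c)| = c * |1 / u - 1 / v| := by
    rw [one_div_div, one_div_div, ← abs_of_pos hc, ← abs_mul, abs_of_pos hc]
    ring_nf
  refine ⟨hmeas.div_const c, fun x hx => (one_le_div hc).2 (hcp x hx), c * C₁, by positivity,
    c * C₂, by positivity, pinf / c, fun x hx y hy hxy => ?_, fun x hx => ?_⟩
  · rw [habs, mul_div_assoc]
    exact mul_le_mul_of_nonneg_left (hloc x hx y hy hxy) hc.le
  · rw [habs, mul_div_assoc]
    exact mul_le_mul_of_nonneg_left (hdecay x hx) hc.le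

lemma continuous_one_div (hp : IsPLog univ p) : Continuous fun x => 1 / p x := by
  obtain ⟨-, -, C, -, -, -, -, hloc, -⟩ := hp
  refine continuous_iff_continuousAt.2 fun x => continuousAt_iff_punctured_nhds.2 <|
    tendsto_iff_norm_sub_tendsto_zero.2 ?_
  have hlog : Filter.Tendsto (fun y => Real.log (Real.exp 1 + 1 / ‖y - x‖)) (𝓝[≠] x)
      Filter.atTop := by
    simp only [one_div]
    exact Real.tendsto_log_atTop.comp <| Filter.tendsto_atTop_add_const_left _ _ <|
      tendsto_inv_nhdsGT_zero.comp (tendsto_norm_sub_self_nhdsNE x)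
  refine squeeze_zero' (Filter.Eventually.of_forall fun _ => norm_nonneg _) ?_
    (hlog.const_div_atTop C)
  filter_upwards [self_mem_nhdsWithin] with y hy
  exact hloc y trivial x trivial hy

lemma le_of_ae_le {μ : Measure E} [μ.IsOpenPosMeasure]
    (hp : IsPLog univ p) {c : ℝ} (hc : 0 < c) (h : ∀ᵐ x ∂μ, c ≤ p x) (x : E) : c ≤ p x := by
  have hiff (y : E) : 1 / p y ≤ 1 / c ↔ c ≤ p y :=
    one_div_le_one_div (zero_lt_one.trans_le (hp.2.1 y trivial)) hc
  have hclosed : IsClosed {y | 1 / p y ≤ 1 / c} :=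
    isClosed_le hp.continuous_one_div continuous_const
  have hdense : Dense {y | 1 / p y ≤ 1 / c} :=
    Measure.dense_of_ae (h.mono fun y hy => (hiff y).2 hy)
  exact (hiff x).1 (hclosed.closure_subset (hdense x))

lemma exists_inv_le_inv_add_of_mem_ball (hp : IsPLog univ p) :
    ∃ C > 0, ∀ z r, ∀ x ∈ ball z r, ∀ y ∈ ball z r,
      (p y)⁻¹ ≤ (p x)⁻¹ + C / Real.log (Real.exp 1 + 1 / (2 * r)) := by
  obtain ⟨-, -, C, hC, -, -, -, hloc, -⟩ := hp
  refine ⟨C, hC, fun z r x hx y hy => ?_⟩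
  have hr : 0 < r := pos_of_mem_ball hx
  have hlog {c : ℝ} (hc : 0 < c) : 0 < Real.log (Real.exp 1 + c) :=
    Real.log_pos ((Real.one_lt_exp_iff.2 one_pos).trans (lt_add_of_pos_right _ hc))
  rcases eq_or_ne y x with rfl | hyx
  · exact le_add_of_nonneg_right (div_pos hC (hlog (by positivity))).le
  have hnorm : 0 < ‖y - x‖ := norm_sub_pos_iff.2 hyx
  have hdist : ‖y - x‖ ≤ 2 * r := by
    rw [← dist_eq_norm, two_mul]
    exact (dist_triangle_right y x z).trans (add_le_add hy.le hx.le)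
  have hmod : C / Real.log (Real.exp 1 + 1 / ‖y - x‖) ≤
      C / Real.log (Real.exp 1 + 1 / (2 * r)) := by
    have := hlog (c := 1 / (2 * r)) (by positivity)
    gcongr
  rw [← one_div, ← one_div]
  linarith [le_abs_self (1 / p y - 1 / p x), hloc y trivial x trivial hyx]

lemma exists_mul_rpow_le_rpow_add_decayWeight (hp : IsPLog Ω p) {m : ℝ} (hm : 0 ≤ m) :
    ∃ γ : ℝ≥0, 0 < γ ∧ ∀ x ∈ Ω, ∀ y ∈ Ω, ∀ a : ℝ≥0∞, a ≤ 1 →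
      (γ * a) ^ p x ≤ a ^ p y + (decayWeight m x + decayWeight m y) := by
  obtain ⟨-, hone, -, -, C, hC, pinf, -, hdecay⟩ := hp
  have hlog (x : E) : 1 ≤ Real.log (Real.exp 1 + ‖x‖) := by
    rw [Real.le_log_iff_exp_le (by positivity)]
    exact le_add_of_nonneg_right (norm_nonneg x)
  have hexp (x : E) : ENNReal.ofReal (Real.exp (-m * Real.log (Real.exp 1 + ‖x‖))) ≤
      decayWeight m x := by
    rw [mul_comm, ← Real.rpow_def_of_pos (by positivity), decayWeight]
    exact ENNReal.ofReal_le_ofReal (Real.rpow_le_rpow_of_nonpos (by positivity)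
      (by gcongr; exact Real.one_le_exp zero_le_one) (neg_nonpos.2 hm))
  refine ⟨Real.toNNReal (Real.exp (-(2 * C * m))), by simpa using Real.exp_pos _,
    fun x hx y hy a ha => ?_⟩
  set ℓ := min (Real.log (Real.exp 1 + ‖x‖)) (Real.log (Real.exp 1 + ‖y‖)) with hℓ
  have hℓ₀ : 0 < ℓ := zero_lt_one.trans_le (le_min (hlog x) (hlog y))
  have hosc : (p x)⁻¹ ≤ (p y)⁻¹ + 2 * C / ℓ := by
    have hx' := (hdecay x hx).trans (div_le_div_of_nonneg_left hC.le hℓ₀ (min_le_left _ _))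
    have hy' := (hdecay y hy).trans (div_le_div_of_nonneg_left hC.le hℓ₀ (min_le_right _ _))
    rw [← one_div, ← one_div, mul_div_assoc]
    linarith [abs_le.1 hx', abs_le.1 hy']
  have hγ : ENNReal.ofReal (Real.exp (-(2 * C * m))) ^ (2 * C / ℓ)⁻¹ ≤
      decayWeight m x + decayWeight m y := by
    rw [ENNReal.ofReal_rpow_of_pos (Real.exp_pos _), ← Real.exp_mul,
      show -(2 * C * m) * (2 * C / ℓ)⁻¹ = -m * ℓ by field_simp]
    rcases min_choice (Real.log (Real.exp 1 + ‖x‖)) (Real.log (Real.exp 1 + ‖y‖)) with h | h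
    · rw [hℓ, h]
      exact (hexp x).trans le_self_add
    · rw [hℓ, h]
      exact (hexp y).trans le_add_self
  rw [mul_comm]
  refine (mul_rpow_le_rpow_add_rpow_inv ha ?_ (zero_lt_one.trans_le (hone x hx))
    (zero_lt_one.trans_le (hone y hy)) (by positivity) hosc).trans (by gcongr; exact hγ)
  exact ENNReal.ofReal_le_one.2 (Real.exp_le_one_iff.2 (neg_nonpos.2 (by positivity)))

lemma exists_mul_laverage_rpow_le (hp : IsPLog univ p) {m : ℝ} (hm : 0 ≤ m) :
    ∃ γ : ℝ≥0, 0 < γ ∧ ∀ g : E → ℝ≥0∞, Measurable g → (∀ y, g y ≤ 1) →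
      ∀ ν : Measure E, [IsFiniteMeasure ν] → ∀ x, (γ * ⨍⁻ y, g y ∂ν) ^ p x ≤
        ⨍⁻ y, g y ^ p y ∂ν + (decayWeight m x + ⨍⁻ y, decayWeight m y ∂ν) := by
  obtain ⟨γ, hγ, hdecay⟩ := hp.exists_mul_rpow_le_rpow_add_decayWeight hm
  refine ⟨γ, hγ, fun g hg hg₁ ν _ x => ?_⟩
  calc (γ * ⨍⁻ y, g y ∂ν) ^ p x
      = (⨍⁻ y, γ * g y ∂ν) ^ p x := by rw [laverage, laverage, lintegral_const_mul' _ _ (by simp)]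
    _ ≤ ⨍⁻ y, (γ * g y) ^ p x ∂ν :=
        rpow_laverage_le_laverage_rpow (hp.2.1 x trivial) (hg.const_mul _).aemeasurable
    _ ≤ ⨍⁻ y, (g y ^ p y + (decayWeight m x + decayWeight m y)) ∂ν :=
        lintegral_mono fun y => hdecay x trivial y trivial (g y) (hg₁ y)
    _ = ⨍⁻ y, g y ^ p y ∂ν + (⨍⁻ _, decayWeight m x ∂ν + ⨍⁻ y, decayWeight m y ∂ν) := by
        simp only [laverage]
        rw [lintegral_add_left (hg.pow hp.1), lintegral_add_left measurable_const]
    _ ≤ _ := by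
        gcongr
        rw [laverage_eq, lintegral_const]
        exact ENNReal.div_le_of_le_mul le_rfl

variable [NormedSpace ℝ E] [FiniteDimensional ℝ E] [BorelSpace E] {μ : Measure E}
  [μ.IsAddHaarMeasure]

lemma exists_mul_setLAverage_ball_rpow_le (hp : IsPLog univ p) :
    ∃ γ : ℝ≥0, 0 < γ ∧ ∀ g : E → ℝ≥0∞, Measurable g → (∀ y, g y = 0 ∨ 1 ≤ g y) →
      ∫⁻ y, g y ^ p y ∂μ ≤ 1 → ∀ z r, ∀ x ∈ ball z r,
        (γ * ⨍⁻ y in ball z r, g y ∂μ) ^ p x ≤ ⨍⁻ y in ball z r, g y ^ p y ∂μ := by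
  have hone (y : E) : 1 ≤ p y := hp.2.1 y trivial
  have hp₀ (y : E) : 0 < p y := one_pos.trans_le (hone y)
  obtain ⟨C, hC, hosc⟩ := hp.exists_inv_le_inv_add_of_mem_ball
  obtain ⟨K, hK₀, hK⟩ := exists_max_one_inv_measure_ball_rpow_le μ hC.le
  refine ⟨K⁻¹, inv_pos.2 hK₀, fun g hg hg₁ hgp z r x hx => ?_⟩
  have hr : 0 < r := pos_of_mem_ball hx
  have : IsFiniteMeasure (μ.restrict (ball z r)) :=
    isFiniteMeasure_restrict.2 measure_ball_lt_top.ne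
  set θ := min 1 ((p x)⁻¹ + C / Real.log (Real.exp 1 + 1 / (2 * r)))
  have hθ : (p x)⁻¹ ≤ θ := le_min (inv_le_one_of_one_le₀ (hone x)) (hosc z r x hx x hx)
  have hmean : ⨍⁻ y in ball z r, g y ∂μ ≤ (⨍⁻ y in ball z r, g y ^ p y ∂μ) ^ θ := by
    refine laverage_le_laverage_rpow_rpow hg.aemeasurable hg₁
      ((inv_pos.2 (hp₀ x)).trans_le hθ) (min_le_left _ _) hp₀ ?_
    filter_upwards [ae_restrict_mem measurableSet_ball] with y hy
    exact le_min (inv_le_one_of_one_le₀ (hone y)) (hosc z r x hx y hy)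
  have hD : ⨍⁻ y in ball z r, g y ^ p y ∂μ ≤ (μ (ball z r))⁻¹ := by
    rw [setLAverage_eq, ← one_div]
    gcongr
    exact (setLIntegral_le_lintegral _ _).trans hgp
  have hpow := rpow_le_mul_rpow_of_le_rpow (hp₀ x) hθ (min_le_right _ _) hmean hD (hK z r hr)
  rw [ENNReal.coe_inv hK₀.ne', ENNReal.mul_rpow_of_nonneg _ _ (hp₀ x).le, ENNReal.inv_rpow,
    mul_comm, ← div_eq_mul_inv]
  exact ENNReal.div_le_of_le_mul hpow

lemma exists_mul_setLAverage_ball_rpow_le_add (hp : IsPLog univ p) {m : ℝ} (hm : 0 ≤ m) :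
    ∃ γ : ℝ≥0, 0 < γ ∧ ∀ g : E → ℝ≥0∞, Measurable g → ∫⁻ y in {y | 1 ≤ g y}, g y ^ p y ∂μ ≤ 1 →
      ∀ z r, ∀ x ∈ ball z r, (γ * ⨍⁻ y in ball z r, g y ∂μ) ^ p x ≤
        ⨍⁻ y in ball z r, g y ^ p y ∂μ +
          (decayWeight m x + ⨍⁻ y in ball z r, decayWeight m y ∂μ) := by
  have hp₀ (y : E) : 0 < p y := one_pos.trans_le (hp.2.1 y trivial)
  obtain ⟨γ₁, hγ₁, hlarge⟩ := hp.exists_mul_setLAverage_ball_rpow_le (μ := μ)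
  obtain ⟨γ₂, hγ₂, hsmall⟩ := hp.exists_mul_laverage_rpow_le hm
  refine ⟨min γ₁ γ₂ / 2, half_pos (lt_min hγ₁ hγ₂), fun g hg hgp z r x hx => ?_⟩
  have : IsFiniteMeasure (μ.restrict (ball z r)) :=
    isFiniteMeasure_restrict.2 measure_ball_lt_top.ne
  set s := {y | 1 ≤ g y}
  have hs : MeasurableSet s := measurableSet_le measurable_const hg
  have hmean_large : (γ₁ * ⨍⁻ y in ball z r, s.indicator g y ∂μ) ^ p x ≤
      ⨍⁻ y in ball z r, s.indicator (fun y => g y ^ p y) y ∂μ := by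
    simp only [← indicator_rpow hp₀]
    refine hlarge _ (hg.indicator hs) (fun y => ?_) ?_ z r x hx
    · by_cases hy : y ∈ s
      · exact .inr ((indicator_of_mem hy g).symm ▸ hy)
      · exact .inl (indicator_of_notMem hy g)
    · simpa only [indicator_rpow hp₀, lintegral_indicator hs] using hgp
  have hmean_small : (γ₂ * ⨍⁻ y in ball z r, sᶜ.indicator g y ∂μ) ^ p x ≤
      ⨍⁻ y in ball z r, sᶜ.indicator (fun y => g y ^ p y) y ∂μ +
        (decayWeight m x + ⨍⁻ y in ball z r, decayWeight m y ∂μ) := by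
    simp only [← indicator_rpow hp₀]
    refine hsmall _ (hg.indicator hs.compl) (fun y => ?_) _ x
    by_cases hy : y ∈ s
    · simp [hy]
    · simpa [hy] using (not_le.1 hy).le
  have hγ {γ : ℝ≥0} (h : min γ₁ γ₂ ≤ γ) : 2 * ((min γ₁ γ₂ / 2 : ℝ≥0) : ℝ≥0∞) ≤ γ := by
    exact_mod_cast (mul_div_cancel₀ _ two_ne_zero).trans_le h
  rw [laverage_eq_indicator_add_indicator_compl hg hs,
    laverage_eq_indicator_add_indicator_compl (hg.pow hp.1) hs, mul_add, add_assoc]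
  refine (add_rpow_le_two_mul_rpow_add_two_mul_rpow _ _ (hp₀ x).le).trans
    (add_le_add (le_trans ?_ hmean_large) (le_trans ?_ hmean_small))
  · rw [← mul_assoc]
    gcongr
    exacts [(hp₀ x).le, hγ (min_le_left _ _)]
  · rw [← mul_assoc]
    gcongr
    exacts [(hp₀ x).le, hγ (min_le_right _ _)]

lemma exists_mul_maximalFunction_rpow_le (hp : IsPLog univ p) {m : ℝ} (hm : 0 ≤ m) :
    ∃ γ : ℝ≥0, 0 < γ ∧ ∀ g : E → ℝ≥0∞, Measurable g → ∫⁻ y in {y | 1 ≤ g y}, g y ^ p y ∂μ ≤ 1 →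
      ∀ x, (γ * maximalFunction μ g x) ^ p x ≤ maximalFunction μ (fun y => g y ^ p y) x +
        (decayWeight m x + maximalFunction μ (decayWeight m) x) := by
  obtain ⟨γ, hγ, hball⟩ := hp.exists_mul_setLAverage_ball_rpow_le_add (μ := μ) hm
  refine ⟨γ, hγ, fun g hg hgp x => ?_⟩
  have hpx : 0 < p x := one_pos.trans_le (hp.2.1 x trivial)
  rw [← ENNReal.le_rpow_inv_iff hpx]
  simp only [maximalFunction, ENNReal.mul_iSup]
  refine iSup_le fun z => iSup₂_le fun r hx => ?_
  rw [ENNReal.le_rpow_inv_iff hpx]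
  refine (hball g hg hgp z r x hx).trans ?_
  gcongr
  · exact setLAverage_ball_le_maximalFunction hx fun y => g y ^ p y
  · exact setLAverage_ball_le_maximalFunction hx (decayWeight m)

end IsPLog

lemma lintegral_decayWeight_add_maximalFunction_rpow_ne_top {E : Type*} [NormedAddCommGroup E]
    [NormedSpace ℝ E] [FiniteDimensional ℝ E] [Nontrivial E] [MeasurableSpace E] [BorelSpace E]
    {μ : Measure E} [μ.IsAddHaarMeasure] {m a : ℝ} (hm : finrank ℝ E < m) (ha : 1 < a) :
    ∫⁻ x, (decayWeight m x + maximalFunction μ (decayWeight m) x) ^ a ∂μ ≠ ⊤ := by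
  have hm₀ : 0 < m := (Nat.cast_nonneg _).trans_lt hm
  have hmeas : Measurable (decayWeight m : E → ℝ≥0∞) := by
    unfold decayWeight
    fun_prop
  have hweight : ∫⁻ x : E, decayWeight m x ^ a ∂μ < ⊤ := by
    refine lt_of_le_of_lt (lintegral_mono fun x => ?_) (finite_integral_one_add_norm hm)
    refine (ENNReal.rpow_le_rpow_of_exponent_ge ?_ ha.le).trans_eq (ENNReal.rpow_one _)
    exact ENNReal.ofReal_le_one.2 (Real.rpow_le_one_of_one_le_of_nonpos
      (le_add_of_nonneg_right (norm_nonneg x)) (neg_nonpos.2 hm₀.le))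
  have hmax : ∫⁻ x : E, maximalFunction μ (decayWeight m) x ^ a ∂μ < ⊤ :=
    (lintegral_maximalFunction_rpow_le ha hmeas).trans_lt (by finiteness)
  exact (ENNReal.lintegral_rpow_add_lt_top_of_lintegral_rpow_lt_top hmeas.aemeasurable hweight
    hmax ha.le).ne

end LogHolder

section Boundedness

lemma lintegral_div_rpow_le_div {α : Type*} [MeasurableSpace α] {μ : Measure α} {p : α → ℝ}
    (hp : ∀ x, 1 ≤ p x) (f : α → ℝ≥0∞) {b : ℝ≥0∞} (hb : 1 ≤ b) :
    ∫⁻ x, (f x / b) ^ p x ∂μ ≤ (∫⁻ x, f x ^ p x ∂μ) / b := by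
  have hb₀ : b ≠ 0 := (one_pos.trans_le hb).ne'
  simp only [div_eq_mul_inv]
  rw [← lintegral_mul_const' _ _ (ENNReal.inv_ne_top.2 hb₀)]
  refine lintegral_mono fun x => ?_
  rw [ENNReal.mul_rpow_of_nonneg _ _ (by linarith [hp x])]
  gcongr
  exact (ENNReal.rpow_le_rpow_of_exponent_ge (ENNReal.inv_le_one.2 hb) (hp x)).trans_eq
    (ENNReal.rpow_one _)

variable {E : Type*} [NormedAddCommGroup E] [NormedSpace ℝ E] [FiniteDimensional ℝ E]
  [Nontrivial E] [MeasurableSpace E] [BorelSpace E] {μ : Measure E} [μ.IsAddHaarMeasure]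
  {p : E → ℝ}

-- The key estimate is applied to `p / pm`, which leaves an integrability exponent `pm > 1` for the
-- strong type inequality.
lemma IsPLog.exists_lintegral_mul_maximalFunction_rpow_le (hp : IsPLog univ p) {pm : ℝ}
    (hpm : 1 < pm) (hpmp : ∀ x, pm ≤ p x) :
    ∃ γ B : ℝ≥0, 0 < γ ∧ ∀ g : E → ℝ≥0∞, Measurable g → ∫⁻ x, g x ^ p x ∂μ ≤ 1 →
      ∫⁻ x, (γ * maximalFunction μ g x) ^ p x ∂μ ≤ B := by
  have hpm₀ : 0 < pm := by linarith
  have hexp (a : ℝ≥0∞) (x : E) : a ^ p x = (a ^ (p x / pm)) ^ pm := by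
    rw [← ENNReal.rpow_mul, div_mul_cancel₀ _ hpm₀.ne']
  obtain ⟨γ, hγ, hM⟩ := (hp.div_const hpm₀ fun x _ => hpmp x).exists_mul_maximalFunction_rpow_le
    (μ := μ) (m := finrank ℝ E + 1) (by positivity)
  set h : E → ℝ≥0∞ := fun x => decayWeight (finrank ℝ E + 1) x +
    maximalFunction μ (decayWeight (finrank ℝ E + 1)) x
  have hh : ∫⁻ x, h x ^ pm ∂μ ≠ ⊤ :=
    lintegral_decayWeight_add_maximalFunction_rpow_ne_top (lt_add_one _) hpm
  set A : ℝ≥0∞ := 2 ^ pm * ENNReal.ofReal (pm / (pm - 1)) * 5 ^ finrank ℝ E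
  refine ⟨γ, (2 ^ (pm - 1) * (A + ∫⁻ x, h x ^ pm ∂μ)).toNNReal, hγ, fun g hg hgp => ?_⟩
  set G : E → ℝ≥0∞ := fun x => g x ^ (p x / pm)
  have hG : Measurable G := hg.pow (hp.1.div_const pm)
  have hlarge : ∫⁻ y in {y | 1 ≤ g y}, G y ∂μ ≤ 1 := by
    refine le_trans (setLIntegral_mono' (measurableSet_le measurable_const hg) fun y hy => ?_)
      ((setLIntegral_le_lintegral _ _).trans hgp)
    exact ENNReal.rpow_le_rpow_of_exponent_le hy
      (div_le_self (hpm₀.le.trans (hpmp y)) hpm.le)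
  rw [ENNReal.coe_toNNReal (by finiteness)]
  calc ∫⁻ x, (γ * maximalFunction μ g x) ^ p x ∂μ
      ≤ ∫⁻ x, 2 ^ (pm - 1) * (maximalFunction μ G x ^ pm + h x ^ pm) ∂μ := by
        refine lintegral_mono fun x => ?_
        rw [hexp]
        refine (ENNReal.rpow_le_rpow (hM g hg hlarge x) hpm₀.le).trans ?_
        exact ENNReal.rpow_add_le_mul_rpow_add_rpow _ _ hpm.le
    _ = 2 ^ (pm - 1) * (∫⁻ x, maximalFunction μ G x ^ pm ∂μ + ∫⁻ x, h x ^ pm ∂μ) := by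
        rw [lintegral_const_mul' _ _ (by finiteness),
          lintegral_add_left ((measurable_maximalFunction G).pow_const pm)]
    _ ≤ 2 ^ (pm - 1) * (A * 1 + ∫⁻ x, h x ^ pm ∂μ) := by
        gcongr
        refine (lintegral_maximalFunction_rpow_le hpm hG).trans ?_
        gcongr
        simpa only [G, ← hexp] using hgp
    _ = 2 ^ (pm - 1) * (A + ∫⁻ x, h x ^ pm ∂μ) := by rw [mul_one]

theorem IsPLog.exists_lintegral_mul_maximalFunction_rpow_le_one (hp : IsPLog univ p) {pm : ℝ}
    (hpm : 1 < pm) (hpmp : ∀ x, pm ≤ p x) :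
    ∃ γ : ℝ≥0, 0 < γ ∧ ∀ g : E → ℝ≥0∞, Measurable g → ∫⁻ x, g x ^ p x ∂μ ≤ 1 →
      ∫⁻ x, (γ * maximalFunction μ g x) ^ p x ∂μ ≤ 1 := by
  obtain ⟨γ, B, hγ, hB⟩ := hp.exists_lintegral_mul_maximalFunction_rpow_le (μ := μ) hpm hpmp
  have hb : 0 < max 1 B := one_pos.trans_le (le_max_left _ _)
  refine ⟨γ / max 1 B, div_pos hγ hb, fun g hg hgp => ?_⟩
  calc ∫⁻ x, ((γ / max 1 B : ℝ≥0) * maximalFunction μ g x) ^ p x ∂μ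
      = ∫⁻ x, (γ * maximalFunction μ g x / (max 1 B : ℝ≥0)) ^ p x ∂μ := by
        simp only [ENNReal.coe_div hb.ne', ENNReal.mul_div_right_comm]
    _ ≤ (∫⁻ x, (γ * maximalFunction μ g x) ^ p x ∂μ) / (max 1 B : ℝ≥0) :=
        lintegral_div_rpow_le_div (fun x => hp.2.1 x trivial) _
          (ENNReal.one_le_coe_iff.2 (le_max_left _ _))
    _ ≤ 1 := by
        refine ENNReal.div_le_of_le_mul ?_
        rw [one_mul]
        exact (hB g hg hgp).trans (ENNReal.coe_le_coe.2 (le_max_right _ _))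

end Boundedness

section LuxemburgNorm

variable {Ω : Type*} [MeasurableSpace Ω] {μ : Measure Ω} {p : Ω → ℝ} {f : Ω → ℝ≥0∞} {l : ℝ≥0∞}

lemma lintegral_div_rpow_le_one_of_luxNorm_lt (hp : ∀ x, 0 ≤ p x) (h : luxNorm μ p f < l) :
    ∫⁻ x, (f x / l) ^ p x ∂μ ≤ 1 := by
  obtain ⟨t, ⟨-, ht⟩, htl⟩ := sInf_lt_iff.1 h
  exact (lintegral_mono fun x =>
    ENNReal.rpow_le_rpow (ENNReal.div_le_div_left htl.le _) (hp x)).trans ht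

lemma luxNorm_le (hl : 0 < l) (h : ∫⁻ x, (f x / l) ^ p x ∂μ ≤ 1) : luxNorm μ p f ≤ l :=
  sInf_le ⟨hl, h⟩

end LuxemburgNorm

section Sobolev

variable {E : Type*} [NormedAddCommGroup E] [NormedSpace ℝ E] [FiniteDimensional ℝ E]
  [MeasurableSpace E] [BorelSpace E] {μ : Measure E} [μ.IsAddHaarMeasure] {p : E → ℝ}
  {pm q β : ℝ}

theorem IsPLog.exists_lintegral_rieszPotential_div_rpow_le_one (hp : IsPLog univ p) (hpm : 1 < pm)
    (hpmp : ∀ x, pm ≤ p x) (hq : 1 ≤ q) (hβ : 0 < β) (hβq : β < finrank ℝ E / q) :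
    ∃ C : ℝ≥0, 0 < C ∧ ∀ g : E → ℝ≥0∞, Measurable g → ∫⁻ x, g x ^ p x ∂μ ≤ 1 →
      ∫⁻ x, g x ^ q ∂μ ≤ 1 →
        ∫⁻ x, (rieszPotential μ β g x / C) ^ (finrank ℝ E * p x / (finrank ℝ E - β * q)) ∂μ ≤
          1 := by
  have hq₀ : 0 < q := by linarith
  have hβqd : β * q < finrank ℝ E := (lt_div_iff₀ hq₀).1 hβq
  have hd : (0 : ℝ) < finrank ℝ E := (by positivity : 0 < β * q).trans hβqd
  have : Nontrivial E := nontrivial_of_finrank_pos (R := ℝ) (by exact_mod_cast hd)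
  set θ := 1 - β * q / finrank ℝ E
  have hθ : 0 < θ := sub_pos.2 ((div_lt_one hd).2 hβqd)
  have hr (x : E) : finrank ℝ E * p x / (finrank ℝ E - β * q) = θ⁻¹ * p x := by
    rw [show θ = (finrank ℝ E - β * q) / finrank ℝ E from one_sub_div hd.ne', inv_div,
      div_mul_eq_mul_div]
  obtain ⟨K, hK⟩ := exists_rieszPotential_le_maximalFunction_rpow (μ := μ) hq hβ hβq
  obtain ⟨γ, hγ, hM⟩ := hp.exists_lintegral_mul_maximalFunction_rpow_le_one (μ := μ) hpm hpmp
  refine ⟨(K + 1) / γ ^ θ, by positivity, fun g hg hgp hgq => ?_⟩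
  refine (lintegral_mono fun x => ?_).trans (hM g hg hgp)
  have hC : (K : ℝ≥0∞) ≤ γ ^ θ * ((K + 1) / γ ^ θ : ℝ≥0) := by
    rw [← ENNReal.coe_rpow_of_nonneg _ hθ.le, ← ENNReal.coe_mul,
      mul_div_cancel₀ _ (NNReal.rpow_pos hγ).ne']
    exact ENNReal.coe_le_coe.2 le_self_add
  have hpoint : rieszPotential μ β g x / ((K + 1) / γ ^ θ : ℝ≥0) ≤
      (γ * maximalFunction μ g x) ^ θ := by
    refine ENNReal.div_le_of_le_mul ((hK g hg hgq x).trans ?_)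
    rw [ENNReal.mul_rpow_of_nonneg _ _ hθ.le, mul_right_comm]
    gcongr
  rw [hr, ENNReal.rpow_mul]
  gcongr
  · linarith [hpmp x]
  · exact (ENNReal.rpow_inv_le_iff hθ).2 hpoint

theorem stmt19_general (hp : IsPLog univ p) (hpm : 1 < pm) (hpmp : ∀ᵐ x ∂μ, pm ≤ p x)
    (hq : 1 ≤ q) (hβ : 0 < β) (hβq : β < finrank ℝ E / q) :
    ∃ C > (0 : ℝ), ∀ g : E → ℝ≥0∞, Measurable g →
      luxNorm μ (fun x => finrank ℝ E * p x / (finrank ℝ E - β * q)) (rieszPotential μ β g) ≤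
        ENNReal.ofReal C * max (luxNorm μ p g) (luxNorm μ (fun _ => q) g) := by
  obtain ⟨C, hC, hint⟩ := hp.exists_lintegral_rieszPotential_div_rpow_le_one (μ := μ) hpm
    (hp.le_of_ae_le (by linarith) hpmp) hq hβ hβq
  refine ⟨C, hC, fun g hg => ?_⟩
  rw [ENNReal.ofReal_coe_nnreal, mul_comm (C : ℝ≥0∞),
    ← ENNReal.div_le_iff_le_mul (.inl (by positivity)) (.inl ENNReal.coe_ne_top)]
  refine le_of_forall_gt_imp_ge_of_dense fun l hl => ?_
  have hl₀ : 0 < l := pos_of_gt hl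
  have hlp := lintegral_div_rpow_le_one_of_luxNorm_lt
    (fun x => zero_le_one.trans (hp.2.1 x trivial)) (max_lt_iff.1 hl).1
  have hlq := lintegral_div_rpow_le_one_of_luxNorm_lt (fun _ => by linarith) (max_lt_iff.1 hl).2
  have hdiv (x : E) :
      rieszPotential μ β g x / (l * C) = rieszPotential μ β (fun y => g y / l) x / C := by
    rw [rieszPotential_div_const g hl₀.ne', div_eq_mul_inv, ENNReal.mul_inv (.inl hl₀.ne')
      (.inr (by positivity)), ← mul_assoc, ← div_eq_mul_inv, ← div_eq_mul_inv]
  rw [ENNReal.div_le_iff_le_mul (.inl (by positivity)) (.inl ENNReal.coe_ne_top)]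
  refine luxNorm_le (by positivity) ?_
  simpa only [hdiv] using hint (fun y => g y / l) (hg.div_const l) hlp hlq

end Sobolev

lemma rieszPot_eq_rieszPotential (n : ℕ) (β : ℝ) (f : Rn n → ℝ) :
    rieszPot n β f = rieszPotential volume β fun y => ENNReal.ofReal |f y| := by
  funext x
  simp only [rieszPot, rieszPotential, finrank_euclideanSpace_fin]

/-- Boundedness of the Riesz potential `I_β` from the mixed space `L^{p(·)} ∩ L^q`
to `L^{r(·)}` with `r(·) = n p(·)/(n − βq)`. -/
theorem stmt19 (n : ℕ) (hn : 1 ≤ n) (q : ℝ) (hq : 1 < q)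
    (p : Rn n → ℝ) (hplog : IsPLog univ p)
    (hpminus : ∃ pm : ℝ, 1 < pm ∧ ∀ᵐ x ∂(volume : Measure (Rn n)), pm ≤ p x)
    (β : ℝ) (hβ : 0 < β)
    (hβp : ∃ P : ℝ, (∀ᵐ x ∂(volume : Measure (Rn n)), p x ≤ P) ∧ β < (n:ℝ) / P)
    (hβq : β < (n:ℝ) / q) :
    ∃ C > (0:ℝ), ∀ f : Rn n → ℝ, Measurable f →
      luxNormR volume p f < ⊤ → luxNormR volume (fun _ => q) f < ⊤ →
      luxNorm volume (fun x => (n:ℝ) * p x / ((n:ℝ) - β * q)) (rieszPot n β f)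
        ≤ ENNReal.ofReal C * max (luxNormR volume p f) (luxNormR volume (fun _ => q) f) := by
  obtain ⟨pm, hpm, hpmp⟩ := hpminus
  obtain ⟨C, hC, hbound⟩ := stmt19_general hplog hpm hpmp hq.le hβ (by simpa using hβq)
  refine ⟨C, hC, fun f hf _ _ => ?_⟩
  simpa [rieszPot_eq_rieszPotential, luxNormR] using
    hbound (fun x => ENNReal.ofReal |f x|) (by fun_prop)
end
end
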